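/- arXiv:2004.05677 — 3 statements merged into one kernel-verified Lean document; each statement's English description precedes it below -/
import Mathlib

section
/- Let p be an odd prime, n ≥ 1, q = p^(2^n), and G = PGL₂(F_q). Then the Möbius function of the subgroup lattice of G, evaluated at the pair (trivial subgroup, full group), equals 0. (This is the numerical consequence of the paper's main theorem that the order complex of the proper part of the subgroup lattice of G is contractible, since contractibility forces reduced Euler characteristic μ_G(1_G) = χ̃ = 0.) -/
open Matrix
/-- `PGL₂(F)`: the projective general linear group, i.e. the quotient of `GL₂(F)`
by its center. -/
abbrev ProjectiveGL2 (F : Type) [Field F] : Type :=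
  Matrix.GeneralLinearGroup (Fin 2) F ⧸ Subgroup.center (Matrix.GeneralLinearGroup (Fin 2) F)

/-- The image of the natural map `SL₂(F) → PGL₂(F)`: the socle of `PGL₂(F)`,
isomorphic to `PSL₂(F)`. -/
def socleSL2 (F : Type) [Field F] : Subgroup (ProjectiveGL2 F) :=
  ((QuotientGroup.mk' (Subgroup.center (Matrix.GeneralLinearGroup (Fin 2) F))).comp
    Matrix.SpecialLinearGroup.toGL).range


/-- The relation `R g h` says that lifts of `g` and `h` commute as matrices; `N` is the subgroup of
index two.  This structure collects the facts about `PGL₂(F)` used in the group-theoretic part. -/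
structure Geo (G : Type) [Group G] (p : ℕ) where
  R : G → G → Prop
  N : Subgroup G
  idx : N.index = 2
  refl : ∀ g, R g g
  symm : ∀ {g h}, R g h → R h g
  one : ∀ g, R g 1
  inv : ∀ {g h}, R g h → R g h⁻¹
  mul : ∀ {g h k}, R g h → R g k → R g (h * k)
  conj : ∀ {g h} (k), R g h → R (k * g * k⁻¹) (k * h * k⁻¹)
  trans : ∀ {g h k}, g ≠ 1 → R g h → R g k → R h k
  comm : ∀ {g h}, R g h → g * h = h * g
  of_comm : ∀ {g h : G}, g * h = h * g → R g h ∨ (g * g = 1 ∧ h * h = 1)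
  anti : ∀ {z k l : G}, z ≠ 1 → z * z = 1 → z * k = k * z → z * l = l * z → ¬ R z k → ¬ R z l →
    R z (k * l)
  uniq : ∀ {z w : G}, z ≠ 1 → z * z = 1 → w ≠ 1 → w * w = 1 → R z w → z = w
  label : ∀ {g : G}, g ≠ 1 → g ^ p = 1 ∨ ∃ z, z ≠ 1 ∧ z * z = 1 ∧ R z g
  order4 : ∀ {s}, s ∉ N → s ^ 4 = 1 → s * s = 1
  unip : ∀ {K : Subgroup G} {t k u : G}, t ∈ K → t ∉ N → t * t = 1 → k ∈ K → k ∉ N → u ∈ K → u ≠ 1 →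
    u ^ p = 1 → R u (k * u * k⁻¹) → K = ⊤
  centr : ∀ {t : G}, t ∉ N → t * t = 1 → ∃ k, R t k ∧ k ≠ 1 ∧ k ≠ t
  center : ∀ {z : G}, z ≠ 1 → ∃ k, z * k ≠ k * z

section mobius

lemma weisner_aux {α : Type*} [Lattice α] [Fintype α] [OrderTop α] [DecidableEq α]
    [DecidableRel (α := α) (· ≤ ·)] (ν : α → ℤ)
    (h : ∀ x, x ≠ ⊤ → ∑ y with x ≤ y, ν y = 0) (a : α) (ha : a ≠ ⊤) (b : α) (hb : b ≤ a) :
    ∑ x with x ⊓ a = b, ν x = 0 := by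
  induction b using WellFoundedGT.induction with
  | ind b ih =>
  have hbt : b ≠ ⊤ := fun hh => ha (top_le_iff.1 (hh ▸ hb))
  have h1 := h b hbt
  rw [← Finset.sum_fiberwise_of_maps_to (t := Finset.univ.filter (fun c => b ≤ c ∧ c ≤ a))
    (g := fun x => x ⊓ a)] at h1
  · rw [Finset.sum_eq_single b] at h1
    · rw [← h1]
      apply Finset.sum_congr _ (fun _ _ => rfl)
      ext x
      simp only [Finset.mem_filter, Finset.mem_univ, true_and]
      constructor
      · intro hx; exact ⟨hx ▸ inf_le_left, hx⟩
      · exact fun hx => hx.2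
    · intro c hc hcb
      simp only [Finset.mem_filter, Finset.mem_univ, true_and] at hc
      rw [← ih c (lt_of_le_of_ne hc.1 (Ne.symm hcb)) hc.2]
      apply Finset.sum_congr _ (fun _ _ => rfl)
      ext x
      simp only [Finset.mem_filter, Finset.mem_univ, true_and]
      constructor
      · exact fun hx => hx.2
      · intro hx; exact ⟨hc.1.trans (hx ▸ inf_le_left), hx⟩
    · intro hh; simp [hb] at hh
  · intro x hx
    simp only [Finset.mem_filter, Finset.mem_univ, true_and] at hx ⊢
    exact ⟨le_inf hx hb, inf_le_right⟩

/-- an element with a unique coatom above it, and different from this coatom, has `ν = 0`. -/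
lemma unique_coatom_aux {α : Type*} [Lattice α] [Fintype α] [OrderTop α] [DecidableEq α]
    [DecidableRel (α := α) (· ≤ ·)] (ν : α → ℤ)
    (h : ∀ x, x ≠ ⊤ → ∑ y with x ≤ y, ν y = 0) (m : α) (hm : m ≠ ⊤) (b : α) (hb : b < m)
    (hu : ∀ x, b ≤ x → x ≠ ⊤ → x ≤ m) : ν b = 0 := by
  induction b using WellFoundedGT.induction with
  | ind b ih =>
  have hbt : b ≠ ⊤ := fun hh => hm (top_le_iff.1 (hh ▸ hb.le))
  have h1 := h b hbt
  have h2 := h m hm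
  have hsub : Finset.univ.filter (fun y => m ≤ y) ⊆ Finset.univ.filter (fun y => b ≤ y) := by
    intro x hx
    simp only [Finset.mem_filter, Finset.mem_univ, true_and] at hx ⊢
    exact hb.le.trans hx
  rw [← Finset.sum_sdiff hsub, h2, add_zero, Finset.sum_eq_single b] at h1
  · exact h1
  · intro c hc hcb
    simp only [Finset.mem_sdiff, Finset.mem_filter, Finset.mem_univ, true_and] at hc
    have hct : c ≠ ⊤ := fun hh => hc.2 (hh ▸ le_top)
    exact ih c (lt_of_le_of_ne hc.1 (Ne.symm hcb)) 
      (lt_of_le_of_ne (hu c hc.1 hct) (fun hh => hc.2 hh.ge)) (fun x hx => hu x (hc.1.trans hx))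
  · intro hh
    exfalso; apply hh
    simp only [Finset.mem_sdiff, Finset.mem_filter, Finset.mem_univ, true_and]
    exact ⟨le_rfl, not_le_of_gt hb⟩

open Classical in
theorem Geo.mobius {G : Type} [Group G] [Finite G] [Fintype (Subgroup G)] {p : ℕ} (D : Geo G p)
    (cls : ∀ (K : Subgroup G) (t : G), t ∈ K → t ∉ D.N → t * t = 1 → K ≠ ⊤ →
      ∃ z, z ≠ 1 ∧ z * z = 1 ∧ ∀ k ∈ K, z * k = k * z)
    (ν : Subgroup G → ℤ)
    (h : ∀ x, x ≠ ⊤ → ∑ y with x ≤ y, ν y = 0) : ν ⊥ = 0 := by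
  have hctop : ∀ z : G, z ≠ 1 → Subgroup.centralizer {z} ≠ ⊤ := by
    intro z hz hh
    obtain ⟨k, hk⟩ := D.center hz
    have : k ∈ Subgroup.centralizer {z} := hh ▸ Subgroup.mem_top k
    rw [Subgroup.mem_centralizer_singleton_iff] at this
    exact hk this.symm
  have hNtop : D.N ≠ ⊤ := by
    intro hh; have := D.idx; rw [hh, Subgroup.index_top] at this; omega
  -- step 2
  have step2 : ∀ t : G, t ∉ D.N → t * t = 1 → ν (Subgroup.zpowers t) = 0 := by
    intro t htN htt
    have ht1 : t ≠ 1 := fun hh => htN (hh ▸ D.N.one_mem)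
    have hle : Subgroup.zpowers t ≤ Subgroup.centralizer {t} := by
      rw [Subgroup.zpowers_le, Subgroup.mem_centralizer_singleton_iff]
    have hzp : ∀ k ∈ Subgroup.zpowers t, k = 1 ∨ k = t := by
      intro k hk
      obtain ⟨i, rfl⟩ := Subgroup.mem_zpowers_iff.1 hk
      rcases Int.even_or_odd' i with ⟨j, rfl | rfl⟩
      · left; rw [_root_.zpow_mul, zpow_two, htt, _root_.one_zpow]
      · right
        rw [_root_.zpow_add, _root_.zpow_mul, zpow_two, htt, _root_.one_zpow, one_mul, zpow_one]
    have hw := weisner_aux ν h (Subgroup.centralizer {t}) (hctop t ht1) (Subgroup.zpowers t) hle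
    rw [Finset.sum_eq_single (Subgroup.zpowers t)] at hw
    · exact hw
    · intro H hH hne
      simp only [Finset.mem_filter, Finset.mem_univ, true_and] at hH
      have htH : t ∈ H := by
        have : t ∈ H ⊓ Subgroup.centralizer {t} := hH ▸ Subgroup.mem_zpowers t
        exact this.1
      have hnle : ¬ H ≤ Subgroup.centralizer {t} := by
        intro hh; rw [inf_eq_left.2 hh] at hH; exact hne hH
      have key : ∀ z w : G, z ≠ 1 → z * z = 1 → w ≠ 1 → w * w = 1 → (∀ k ∈ H, z * k = k * z) →
          (∀ k ∈ H, w * k = k * w) → z = w := by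
        intro z w hz hzz hw hww hzH hwH
        by_contra hzw
        have aux : ∀ z : G, z ≠ 1 → z * z = 1 → (∀ k ∈ H, z * k = k * z) → ¬ D.R t z := by
          intro z hz hzz hzH hR
          have := D.uniq ht1 htt hz hzz hR
          subst this
          exact hnle (fun k hk => Subgroup.mem_centralizer_singleton_iff.2 (hzH k hk).symm)
        have hR := D.anti ht1 htt (hzH t htH).symm (hwH t htH).symm (aux z hz hzz hzH)
          (aux w hw hww hwH)
        have hne1 : z * w ≠ 1 := by
          intro hh
          exact hzw (by rw [mul_eq_one_iff_eq_inv.1 hh]; exact (eq_inv_of_mul_eq_one_left hww).symm)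
        apply hnle
        intro k hk
        rw [Subgroup.mem_centralizer_singleton_iff]
        have hc : (z * w) * k = k * (z * w) := by
          rw [mul_assoc, hwH k hk, ← mul_assoc, hzH k hk, mul_assoc]
        rcases D.of_comm hc with hR2 | ⟨h2, -⟩
        · exact D.comm (D.trans hne1 hR2 (D.symm hR))
        · have := D.uniq ht1 htt hne1 h2 hR
          rw [this, hc]
      by_cases hHt : H = ⊤
      · exfalso
        rw [hHt, top_inf_eq] at hH
        obtain ⟨k, hk, hk1, hkt⟩ := D.centr htN htt
        have hk2 : k ∈ Subgroup.zpowers t := by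
          rw [← hH, Subgroup.mem_centralizer_singleton_iff]; exact (D.comm hk).symm
        rcases hzp k hk2 with hh | hh
        · exact hk1 hh
        · exact hkt hh
      · obtain ⟨z, hz, hzz, hzH⟩ := cls H t htH htN htt hHt
        apply unique_coatom_aux ν h (Subgroup.centralizer {z}) (hctop z hz)
        · refine lt_of_le_of_ne (fun k hk => ?_) ?_
          · exact Subgroup.mem_centralizer_singleton_iff.2 (hzH k hk).symm
          · intro hh
            have hzmem : z ∈ H := by rw [hh, Subgroup.mem_centralizer_singleton_iff]
            have : z ∈ H ⊓ Subgroup.centralizer {t} :=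
              ⟨hzmem, Subgroup.mem_centralizer_singleton_iff.2 (hzH t htH)⟩
            rw [hH] at this
            have hR : D.R t z := by
              rcases hzp z this with hh | hh
              · exact absurd hh hz
              · rw [hh]; exact D.refl _
            have := D.uniq ht1 htt hz hzz hR
            subst this
            exact hnle (fun k hk => Subgroup.mem_centralizer_singleton_iff.2 (hzH k hk).symm)
        · intro x hx hxt
          obtain ⟨w, hw, hww, hwx⟩ := cls x t (hx htH) htN htt hxt
          have := key z w hz hzz hw hww hzH (fun k hk => hwx k (hx hk))
          subst this
          exact fun k hk => Subgroup.mem_centralizer_singleton_iff.2 (hwx k hk).symm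
    · intro hh
      exfalso; apply hh
      simp [hle]
  have hw := weisner_aux ν h D.N hNtop ⊥ bot_le
  rw [Finset.sum_eq_single ⊥] at hw
  · exact hw
  · intro H hH hne
    simp only [Finset.mem_filter, Finset.mem_univ, true_and] at hH
    obtain ⟨t, htH, ht1⟩ := H.ne_bot_iff_exists_ne_one.1 hne |> fun ⟨a, ha⟩ =>
      (⟨a.1, a.2, fun hh => ha (Subtype.ext hh)⟩ : ∃ a : G, a ∈ H ∧ a ≠ 1)
    have hN : ∀ x ∈ H, x ∈ D.N → x = 1 := by
      intro x hx hxN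
      have : x ∈ H ⊓ D.N := ⟨hx, hxN⟩
      rwa [hH, Subgroup.mem_bot] at this
    have htN : t ∉ D.N := fun hh => ht1 (hN t htH hh)
    have hmul : ∀ x y, x ∈ H → x ∉ D.N → y ∈ H → y ∉ D.N → x * y = 1 := by
      intro x y hx hxN hy hyN
      apply hN _ (H.mul_mem hx hy)
      rw [Subgroup.mul_mem_iff_of_index_two D.idx]
      tauto
    have : H = Subgroup.zpowers t := by
      apply le_antisymm
      · intro x hx
        by_cases hxN : x ∈ D.N
        · rw [hN x hx hxN]; exact Subgroup.one_mem _
        · have h1 := hmul x t hx hxN htH htN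
          rw [mul_eq_one_iff_eq_inv.1 h1]
          exact Subgroup.inv_mem _ (Subgroup.mem_zpowers t)
      · rwa [Subgroup.zpowers_le]
    rw [this]
    exact step2 t htN (hmul t t htH htN htH htN)
  · intro hh; simp at hh

end mobius


section classification

variable {G : Type} [Group G] {p : ℕ}

lemma Geo.norm (D : Geo G p) {z g k : G} (hz : z ≠ 1) (hzz : z * z = 1) (hg : g ≠ 1)
    (hR : D.R z g) (hk : D.R g (k * g * k⁻¹)) : z * k = k * z := by
  have h1 : D.R z (k * g * k⁻¹) := D.trans hg (D.symm hR) hk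
  have h2 : D.R (k * g * k⁻¹) (k * z * k⁻¹) := D.conj k (D.symm hR)
  have hg' : k * g * k⁻¹ ≠ 1 := by rwa [Ne, conj_eq_one_iff]
  have h3 : D.R z (k * z * k⁻¹) := D.trans hg' (D.symm h1) h2
  have h4 := D.uniq hz hzz (by rwa [Ne, conj_eq_one_iff])
    (by rw [_root_.conj_mul, hzz]; simp) h3
  rw [eq_mul_inv_iff_mul_eq] at h4
  exact h4

lemma Geo.sq_ne {u : G} (hodd : Odd p) (hu : u ≠ 1) (hup : u ^ p = 1) :
    u * u ≠ 1 := by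
  intro h
  rw [← pow_two] at h
  have h1 := orderOf_dvd_of_pow_eq_one h
  have h2 := orderOf_dvd_of_pow_eq_one hup
  have h3 := Nat.dvd_gcd h1 h2
  have : Nat.gcd 2 p = 1 := (Nat.coprime_two_left).2 hodd
  rw [this, Nat.dvd_one, orderOf_eq_one_iff] at h3
  exact hu h3

theorem Geo.pcase [Finite G] (hp : p.Prime) (hodd : Odd p) (D : Geo G p) {K : Subgroup G} {t : G}
    (htK : t ∈ K) (htN : t ∉ D.N) (htt : t * t = 1) {u : G} (huK : u ∈ K) (hu : u ≠ 1)
    (hup : u ^ p = 1) : K = ⊤ := by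
  have : Fact p.Prime := ⟨hp⟩
  have : D.N.Normal := Subgroup.normal_of_index_eq_two D.idx
  have huN : u ∈ D.N := by
    obtain ⟨m, rfl⟩ := hodd
    have : u = (u * u) ^ (m + 1) := by
      rw [← pow_two, ← pow_mul, show 2 * (m + 1) = (2 * m + 1) + 1 by ring, pow_succ, hup, one_mul]
    rw [this]
    exact D.N.pow_mem (Subgroup.mul_self_mem_of_index_two D.idx u) _
  let N' : Subgroup K := D.N.subgroupOf K
  obtain ⟨P⟩ : Nonempty (Sylow p N') := inferInstance
  have hfr := Sylow.normalizer_sup_eq_top P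
  obtain ⟨x, hx, hxN⟩ : ∃ x ∈ Subgroup.normalizer (Subgroup.map N'.subtype (P : Subgroup N') : Set K),
      x ∉ N' := by
    by_contra hcon
    push Not at hcon
    have : (⊤ : Subgroup K) ≤ N' := by
      rw [← hfr]
      exact sup_le (fun x hx => hcon x hx) le_rfl
    have h2 : (⟨t, htK⟩ : K) ∈ N' := this (Subgroup.mem_top _)
    exact htN (Subgroup.mem_subgroupOf.1 h2)
  let u' : N' := ⟨⟨u, huK⟩, Subgroup.mem_subgroupOf.2 huN⟩
  have hou : orderOf u' = p := by
    apply orderOf_eq_prime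
    · ext; simpa [u'] using hup
    · intro h; apply hu
      have := congrArg (fun y : N' => ((y : K) : G)) h
      simpa [u'] using this
  have hdvd : p ∣ Nat.card N' := hou ▸ orderOf_dvd_natCard u'
  have hPne : (P : Subgroup N') ≠ ⊥ := P.ne_bot_of_dvd_card hdvd
  have : Nontrivial (P : Subgroup N') := (Subgroup.nontrivial_iff_ne_bot _).2 hPne
  have := P.2.center_nontrivial
  have hcp : p ∣ Nat.card (Subgroup.center (P : Subgroup N')) := by
    obtain ⟨n, hn, hn2⟩ := (P.2.to_subgroup (Subgroup.center (P : Subgroup N'))).nontrivial_iff_card.1 inferInstance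
    rw [hn2]; exact dvd_pow_self p hn.ne'
  obtain ⟨c, hc⟩ := exists_prime_orderOf_dvd_card' p hcp
  let v : K := (((c : (P : Subgroup N')) : N') : K)
  have hv1 : (v : G) ≠ 1 := by
    intro h
    have : c = 1 := by
      ext; exact h
    rw [this, orderOf_one] at hc
    exact hp.one_lt.ne hc
  have hvp : (v : G) ^ p = 1 := by
    have := pow_orderOf_eq_one c
    rw [hc] at this
    have h2 := congrArg (fun y : Subgroup.center (P : Subgroup N') => ((((y : (P : Subgroup N')) : N') : K) : G)) this
    simpa [v] using h2
  have hvmem : v ∈ Subgroup.map N'.subtype (P : Subgroup N') := ⟨_, (c : (P : Subgroup N')).2, rfl⟩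
  have hxv := (Subgroup.mem_normalizer_iff.1 hx v).1 hvmem
  obtain ⟨y, hy, hyx⟩ := hxv
  have hcomm : (v : G) * (x * v * x⁻¹ : K) = (x * v * x⁻¹ : K) * v := by
    rw [← hyx]
    have := (Subgroup.mem_center_iff.1 c.2) ⟨y, hy⟩
    have h2 := congrArg (fun y : (P : Subgroup N') => (((y : N') : K) : G)) this
    exact h2.symm
  refine D.unip htK htN htt x.2 (fun h => hxN (Subgroup.mem_subgroupOf.2 h)) v.2 hv1 hvp ?_
  rcases D.of_comm hcomm with h | ⟨h, -⟩
  · simpa using h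
  · exact absurd h (Geo.sq_ne hodd hv1 hvp)

/-- the case where all elements outside `N` are involutions. -/
lemma Geo.allinv (D : Geo G p) {K : Subgroup G} {t : G}
    (htK : t ∈ K) (htN : t ∉ D.N) (hp' : ∀ u ∈ K, u ≠ 1 → u ^ p ≠ 1)
    (hall : ∀ s ∈ K, s ∉ D.N → s * s = 1) :
    ∃ z, z ≠ 1 ∧ z * z = 1 ∧ ∀ k ∈ K, z * k = k * z := by
  have ht1 : t ≠ 1 := fun hh => htN (hh ▸ D.N.one_mem)
  have hinv : ∀ s ∈ K, s ∉ D.N → ∀ m ∈ K, m ∈ D.N → s * m * s⁻¹ = m⁻¹ := by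
    intro s hs hsN m hm hmN
    have h1 := hall (s * m) (K.mul_mem hs hm) (by
      rw [Subgroup.mul_mem_iff_of_index_two D.idx]; tauto)
    have h2 := hall s hs hsN
    have h3 : s⁻¹ = s := inv_eq_of_mul_eq_one_left h2
    rw [h3]
    apply eq_inv_of_mul_eq_one_left
    rw [← h1]; group
  by_cases hm : ∃ m ∈ K, m ∈ D.N ∧ m * m ≠ 1
  · obtain ⟨m, hmK, hmN, hmm⟩ := hm
    have hm1 : m ≠ 1 := by rintro rfl; simp at hmm
    obtain ⟨z, hz, hzz, hzR⟩ := (D.label hm1).resolve_left (hp' m hmK hm1)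
    refine ⟨z, hz, hzz, fun k hk => D.norm hz hzz hm1 hzR ?_⟩
    by_cases hkN : k ∈ D.N
    · have h1 := hinv t htK htN m hmK hmN
      have h2 := hinv (k * t) (K.mul_mem hk htK) (by
        rw [Subgroup.mul_mem_iff_of_index_two D.idx]; tauto) m hmK hmN
      have h3 : k * m⁻¹ * k⁻¹ = m⁻¹ := by
        calc k * m⁻¹ * k⁻¹ = k * (t * m * t⁻¹) * k⁻¹ := by rw [h1]
          _ = k * t * m * (k * t)⁻¹ := by group
          _ = m⁻¹ := h2
      have h4 : k * m * k⁻¹ = m := by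
        have := congrArg (·⁻¹) h3
        simpa [mul_assoc] using this
      rw [h4]; exact D.refl m
    · rw [hinv k hk hkN m hmK hmN]; exact D.inv (D.refl m)
  · push Not at hm
    have hsq : ∀ k ∈ K, k * k = 1 := by
      intro k hk
      by_cases hkN : k ∈ D.N
      · exact hm k hk hkN
      · exact hall k hk hkN
    refine ⟨t, ht1, hsq t htK, fun k hk => ?_⟩
    have h1 := hsq (t * k) (K.mul_mem htK hk)
    have h2 : k⁻¹ = k := inv_eq_of_mul_eq_one_left (hsq k hk)
    have h3 : t⁻¹ = t := inv_eq_of_mul_eq_one_left (hsq t htK)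
    have h4 := eq_inv_of_mul_eq_one_left h1
    rw [h4, _root_.mul_inv_rev, h2, h3]


open Classical in
/-- involutions -/
noncomputable def Geo.I [Fintype G] (_D : Geo G p) : Finset G :=
  Finset.univ.filter (fun z => z ≠ 1 ∧ z * z = 1)

open Classical in
/-- elements of `K` outside `N` with label `z` -/
noncomputable def Geo.sO [Fintype G] (D : Geo G p) (K : Subgroup G) (z : G) : Finset G :=
  Finset.univ.filter (fun k => k ∈ K ∧ k ∉ D.N ∧ D.R z k)

open Classical in
/-- nontrivial elements of `K` inside `N` with label `z` -/
noncomputable def Geo.sN [Fintype G] (D : Geo G p) (K : Subgroup G) (z : G) : Finset G :=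
  Finset.univ.filter (fun k => k ∈ K ∧ k ∈ D.N ∧ k ≠ 1 ∧ D.R z k)

open Classical in
/-- the centralizer of `z` in `K` -/
noncomputable def Geo.sC [Fintype G] (_D : Geo G p) (K : Subgroup G) (z : G) : Finset G :=
  Finset.univ.filter (fun k => k ∈ K ∧ z * k = k * z)

open Classical in
/-- the `K`-conjugates of `z` -/
noncomputable def Geo.orb [Fintype G] (_D : Geo G p) (K : Subgroup G) (z : G) : Finset G :=
  Finset.univ.filter (fun w => ∃ k ∈ K, w = k * z * k⁻¹)

open Classical in
noncomputable def Geo.KO [Fintype G] (D : Geo G p) (K : Subgroup G) : Finset G :=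
  Finset.univ.filter (fun k => k ∈ K ∧ k ∉ D.N)

variable [Fintype G] (D : Geo G p) (K : Subgroup G)

lemma Geo.mem_I {z : G} : z ∈ D.I ↔ z ≠ 1 ∧ z * z = 1 := by simp [Geo.I]
lemma Geo.mem_sO {z k : G} : k ∈ D.sO K z ↔ k ∈ K ∧ k ∉ D.N ∧ D.R z k := by simp [Geo.sO]
lemma Geo.mem_sN {z k : G} : k ∈ D.sN K z ↔ k ∈ K ∧ k ∈ D.N ∧ k ≠ 1 ∧ D.R z k := by simp [Geo.sN]
lemma Geo.mem_sC {z k : G} : k ∈ D.sC K z ↔ k ∈ K ∧ z * k = k * z := by simp [Geo.sC]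
lemma Geo.mem_orb {z w : G} : w ∈ D.orb K z ↔ ∃ k ∈ K, w = k * z * k⁻¹ := by simp [Geo.orb]
lemma Geo.mem_KO {k : G} : k ∈ D.KO K ↔ k ∈ K ∧ k ∉ D.N := by simp [Geo.KO]

lemma Geo.self_mem_orb (z : G) : z ∈ D.orb K z := by
  rw [D.mem_orb]; exact ⟨1, K.one_mem, by simp⟩

lemma Geo.conj_inv {z : G} (k : G) (hz : z ∈ D.I) : k * z * k⁻¹ ∈ D.I := by
  rw [D.mem_I] at *
  refine ⟨by rw [Ne, conj_eq_one_iff]; exact hz.1, ?_⟩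
  rw [_root_.conj_mul, hz.2]; simp

lemma Geo.orb_sub {z : G} (hz : z ∈ D.I) : D.orb K z ⊆ D.I := by
  intro w hw
  obtain ⟨k, -, rfl⟩ := (D.mem_orb K).1 hw
  exact D.conj_inv k hz

lemma Geo.uniqI {z w g : G} (hg : g ≠ 1) (hz : z ∈ D.I) (hw : w ∈ D.I) (h1 : D.R z g)
    (h2 : D.R w g) : z = w := by
  rw [D.mem_I] at hz hw
  exact D.uniq hz.1 hz.2 hw.1 hw.2 (D.trans hg (D.symm h1) (D.symm h2))

lemma Geo.orb_card (z : G) : (D.orb K z).card * (D.sC K z).card = Nat.card K := by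
  classical
  have h1 : Nat.card K = (Finset.univ.filter (fun k => k ∈ K)).card := by
    rw [Nat.card_eq_fintype_card, Fintype.card_subtype]
  have h2 : ∀ k ∈ Finset.univ.filter (fun k => k ∈ K), k * z * k⁻¹ ∈ D.orb K z := by
    intro k hk
    exact (D.mem_orb K).2 ⟨k, (Finset.mem_filter.1 hk).2, rfl⟩
  have h3 := Finset.card_eq_sum_card_fiberwise (f := fun k => k * z * k⁻¹) h2
  rw [h1, h3, Finset.sum_const_nat]
  · intro w hw
    obtain ⟨k, hk, rfl⟩ := (D.mem_orb K).1 hw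
    apply Finset.card_equiv (Equiv.mulLeft k⁻¹)
    intro l
    rw [D.mem_sC]
    simp only [Finset.mem_filter, Finset.mem_univ, true_and, Equiv.coe_mulLeft]
    have e1 : k⁻¹ * l ∈ K ↔ l ∈ K := K.mul_mem_cancel_left (K.inv_mem hk)
    rw [e1]
    apply and_congr_right
    intro _
    rw [mul_inv_eq_iff_eq_mul]
    constructor
    · intro h
      rw [show k⁻¹ * l * z = k⁻¹ * (l * z) by group, h]; group
    · intro h
      rw [show l * z = k * (k⁻¹ * l * z) by group, ← h]; group

lemma Geo.conjR {z g k : G} : D.R (k * z * k⁻¹) (k * g * k⁻¹) ↔ D.R z g := by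
  constructor
  · intro h
    have := D.conj k⁻¹ h
    simpa [mul_assoc] using this
  · exact D.conj k

lemma Geo.conjK {g k : G} (hk : k ∈ K) : k * g * k⁻¹ ∈ K ↔ g ∈ K := by
  rw [K.mul_mem_cancel_right (K.inv_mem hk), K.mul_mem_cancel_left hk]

lemma Geo.conjN {g k : G} : k * g * k⁻¹ ∈ D.N ↔ g ∈ D.N := by
  have : D.N.Normal := Subgroup.normal_of_index_eq_two D.idx
  constructor
  · intro h
    have := this.conj_mem _ h k⁻¹
    simpa [mul_assoc] using this
  · exact fun h => this.conj_mem _ h k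

lemma Geo.sO_card_conj {z k : G} (hk : k ∈ K) :
    (D.sO K (k * z * k⁻¹)).card = (D.sO K z).card := by
  symm
  apply Finset.card_equiv (MulAut.conj k).toEquiv
  intro l
  simp only [D.mem_sO, MulEquiv.toEquiv_eq_coe, EquivLike.coe_coe, MulAut.conj_apply, D.conjR,
    D.conjN, Geo.conjK K hk]

lemma Geo.sN_card_conj {z k : G} (hk : k ∈ K) :
    (D.sN K (k * z * k⁻¹)).card = (D.sN K z).card := by
  symm
  apply Finset.card_equiv (MulAut.conj k).toEquiv
  intro l
  simp only [D.mem_sN, MulEquiv.toEquiv_eq_coe, EquivLike.coe_coe, MulAut.conj_apply, D.conjR,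
    D.conjN, Geo.conjK K hk, Ne, conj_eq_one_iff]

lemma Geo.sum_sO (S : Finset G) (hS : S ⊆ D.I) [DecidableEq G] :
    ∑ z ∈ S, (D.sO K z).card = (S.biUnion (D.sO K)).card := by
  rw [Finset.card_biUnion]
  intro z hz w hw hzw
  rw [Function.onFun, Finset.disjoint_left]
  intro g hg hg'
  rw [D.mem_sO] at hg hg'
  have hg1 : g ≠ 1 := fun hh => hg.2.1 (hh ▸ D.N.one_mem)
  exact hzw (D.uniqI hg1 (hS hz) (hS hw) hg.2.2 hg'.2.2)

lemma Geo.sum_sN (S : Finset G) (hS : S ⊆ D.I) [DecidableEq G] :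
    ∑ z ∈ S, (D.sN K z).card = (S.biUnion (D.sN K)).card := by
  rw [Finset.card_biUnion]
  intro z hz w hw hzw
  rw [Function.onFun, Finset.disjoint_left]
  intro g hg hg'
  rw [D.mem_sN] at hg hg'
  exact hzw (D.uniqI hg.2.2.1 (hS hz) (hS hw) hg.2.2.2 hg'.2.2.2)

/-- the elements with label `z` -/
def Geo.T (D : Geo G p) (z : G) : Subgroup G where
  carrier := {k | D.R z k}
  one_mem' := D.one z
  mul_mem' := D.mul
  inv_mem' := D.inv

lemma Geo.T_card (z : G) : Nat.card (K ⊓ D.T z : Subgroup G) =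
    (D.sO K z).card + ((D.sN K z).card + 1) := by
  classical
  have h1 : Nat.card (K ⊓ D.T z : Subgroup G) =
      (Finset.univ.filter (fun k => k ∈ K ⊓ D.T z)).card := by
    rw [Nat.card_eq_fintype_card, Fintype.card_subtype]
  have h2 : (1 : G) ∉ D.sN K z := by rw [D.mem_sN]; tauto
  rw [h1, ← Finset.card_insert_of_notMem h2, ← Finset.card_union_of_disjoint]
  · congr 1
    ext k
    simp only [Finset.mem_filter, Finset.mem_univ, true_and, Finset.mem_union, Finset.mem_insert,
      D.mem_sO, D.mem_sN, Subgroup.mem_inf]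
    have hT : k ∈ D.T z ↔ D.R z k := Iff.rfl
    rw [hT]
    constructor
    · rintro ⟨h1, h2⟩; tauto
    · rintro (h | rfl | h)
      · tauto
      · exact ⟨K.one_mem, D.one z⟩
      · tauto
  · rw [Finset.disjoint_left]
    intro k hk hk'
    rw [D.mem_sO] at hk
    rw [Finset.mem_insert, D.mem_sN] at hk'
    rcases hk' with rfl | h
    · exact hk.2.1 D.N.one_mem
    · exact hk.2.1 h.2.1

/-- if there is one element outside `N`, half of the elements are outside. -/
lemma Geo.half {H : Subgroup G} [DecidablePred (· ∈ H)] [DecidablePred (· ∈ D.N)] {t : G}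
    (ht : t ∈ H) (htN : t ∉ D.N) :
    (Finset.univ.filter (fun k => k ∈ H ∧ k ∉ D.N)).card =
    (Finset.univ.filter (fun k => k ∈ H ∧ k ∈ D.N)).card := by
  apply Finset.card_equiv (Equiv.mulLeft t)
  intro l
  simp only [Finset.mem_filter, Finset.mem_univ, true_and, Equiv.coe_mulLeft,
    H.mul_mem_cancel_left ht, Subgroup.mul_mem_iff_of_index_two D.idx]
  tauto

lemma Geo.sO_sN {z : G} (h : (D.sO K z).card ≠ 0) : (D.sO K z).card = (D.sN K z).card + 1 := by
  classical
  obtain ⟨t, ht⟩ := Finset.card_ne_zero.1 h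
  rw [D.mem_sO] at ht
  have h2 : (1 : G) ∉ D.sN K z := by rw [D.mem_sN]; tauto
  rw [← Finset.card_insert_of_notMem h2]
  have := D.half (H := K ⊓ D.T z) (t := t) ⟨ht.1, ht.2.2⟩ ht.2.1
  convert this using 2
  · ext k
    simp only [D.mem_sO, Finset.mem_filter, Finset.mem_univ, true_and, Subgroup.mem_inf]
    have hT : k ∈ D.T z ↔ D.R z k := Iff.rfl
    rw [hT]; tauto
  · ext k
    simp only [D.mem_sN, Finset.mem_filter, Finset.mem_univ, true_and, Subgroup.mem_inf,
      Finset.mem_insert]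
    have hT : k ∈ D.T z ↔ D.R z k := Iff.rfl
    rw [hT]
    constructor
    · rintro (rfl | h)
      · exact ⟨⟨K.one_mem, D.one z⟩, D.N.one_mem⟩
      · tauto
    · tauto

lemma Geo.sC_card {z : G} (hz : z ∈ D.I) :
    (D.sC K z).card = Nat.card (K ⊓ D.T z : Subgroup G) ∨
    (D.sC K z).card = 2 * Nat.card (K ⊓ D.T z : Subgroup G) ∧
      ¬ (∀ k ∈ K, z * k = k * z → D.R z k) := by
  classical
  have h1 : Nat.card (K ⊓ D.T z : Subgroup G) =
      (Finset.univ.filter (fun k => k ∈ K ⊓ D.T z)).card := by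
    rw [Nat.card_eq_fintype_card, Fintype.card_subtype]
  have hT : ∀ k, k ∈ D.T z ↔ D.R z k := fun k => Iff.rfl
  by_cases h : ∀ k ∈ K, z * k = k * z → D.R z k
  · left
    rw [h1]
    congr 1
    ext k
    simp only [D.mem_sC, Finset.mem_filter, Finset.mem_univ, true_and, Subgroup.mem_inf, hT]
    constructor
    · exact fun hk => ⟨hk.1, h k hk.1 hk.2⟩
    · exact fun hk => ⟨hk.1, D.comm hk.2⟩
  · right
    refine ⟨?_, h⟩
    push Not at h
    obtain ⟨k, hk, hzk, hR⟩ := h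
    rw [D.mem_I] at hz
    have h2 : (Finset.univ.filter (fun k => k ∈ K ⊓ D.T z)).card =
        (Finset.univ.filter (fun k => k ∈ K ∧ z * k = k * z ∧ ¬ D.R z k)).card := by
      apply Finset.card_equiv (Equiv.mulLeft k)
      intro l
      simp only [Finset.mem_filter, Finset.mem_univ, true_and, Equiv.coe_mulLeft,
        K.mul_mem_cancel_left hk, Subgroup.mem_inf, hT]
      apply and_congr_right
      intro hl
      constructor
      · intro hRl
        refine ⟨?_, ?_⟩
        · rw [← mul_assoc, hzk, mul_assoc, D.comm hRl, mul_assoc]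
        · intro hRkl
          apply hR
          have := D.mul hRkl (D.inv hRl)
          simpa using this
      · rintro ⟨h3, h4⟩
        have hk' : z * k⁻¹ = k⁻¹ * z := by
          rw [eq_inv_mul_iff_mul_eq, ← mul_assoc, ← hzk]; group
        have := D.anti hz.1 hz.2 hk' h3 (fun hh => hR (by simpa using D.inv hh)) h4
        simpa using this
    rw [h1, two_mul]
    nth_rw 2 [h2]
    rw [← Finset.card_union_of_disjoint]
    · congr 1
      ext k
      simp only [D.mem_sC, Finset.mem_filter, Finset.mem_univ, true_and, Subgroup.mem_inf, hT,
        Finset.mem_union]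
      constructor
      · intro h; by_cases D.R z k <;> tauto
      · rintro (h | h)
        · exact ⟨h.1, D.comm h.2⟩
        · exact ⟨h.1, h.2.1⟩
    · rw [Finset.disjoint_left]
      intro k hk hk'
      simp only [Finset.mem_filter, Finset.mem_univ, true_and, Subgroup.mem_inf, hT] at hk hk'
      tauto


open Classical in
noncomputable def Geo.Z1 (D : Geo G p) (K : Subgroup G) : Finset G :=
  D.I.filter (fun z => (D.sO K z).card ≠ 0)

open Classical in
noncomputable def Geo.Z2 (D : Geo G p) (K : Subgroup G) : Finset G :=
  D.I.filter (fun z => (D.sO K z).card = 0)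

lemma Geo.mem_Z1 {z : G} : z ∈ D.Z1 K ↔ z ∈ D.I ∧ (D.sO K z).card ≠ 0 := by simp [Geo.Z1]
lemma Geo.mem_Z2 {z : G} : z ∈ D.Z2 K ↔ z ∈ D.I ∧ (D.sO K z).card = 0 := by simp [Geo.Z2]

lemma Geo.Z1_conj {z k : G} (hk : k ∈ K) (hz : z ∈ D.Z1 K) : k * z * k⁻¹ ∈ D.Z1 K := by
  rw [D.mem_Z1] at *
  exact ⟨D.conj_inv k hz.1, by rw [D.sO_card_conj K hk]; exact hz.2⟩

lemma Geo.Z2_conj {z k : G} (hk : k ∈ K) (hz : z ∈ D.Z2 K) : k * z * k⁻¹ ∈ D.Z2 K := by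
  rw [D.mem_Z2] at *
  exact ⟨D.conj_inv k hz.1, by rw [D.sO_card_conj K hk]; exact hz.2⟩

lemma Geo.orb_sub_Z1 {z : G} (hz : z ∈ D.Z1 K) : D.orb K z ⊆ D.Z1 K := by
  intro w hw
  obtain ⟨k, hk, rfl⟩ := (D.mem_orb K).1 hw
  exact D.Z1_conj K hk hz

lemma Geo.orb_sub_Z2 {z : G} (hz : z ∈ D.Z2 K) : D.orb K z ⊆ D.Z2 K := by
  intro w hw
  obtain ⟨k, hk, rfl⟩ := (D.mem_orb K).1 hw
  exact D.Z2_conj K hk hz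

lemma Geo.sum_orb_sO (z : G) :
    ∑ w ∈ D.orb K z, (D.sO K w).card = (D.orb K z).card * (D.sO K z).card := by
  rw [Finset.sum_const_nat]
  intro w hw
  obtain ⟨k, hk, rfl⟩ := (D.mem_orb K).1 hw
  exact D.sO_card_conj K hk

lemma Geo.sum_orb_sN (z : G) :
    ∑ w ∈ D.orb K z, (D.sN K w).card = (D.orb K z).card * (D.sN K z).card := by
  rw [Finset.sum_const_nat]
  intro w hw
  obtain ⟨k, hk, rfl⟩ := (D.mem_orb K).1 hw
  exact D.sN_card_conj K hk

lemma Geo.orb_disj {z w : G} (h : w ∉ D.orb K z) : Disjoint (D.orb K z) (D.orb K w) := by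
  rw [Finset.disjoint_left]
  intro x hx hx'
  obtain ⟨k, hk, rfl⟩ := (D.mem_orb K).1 hx
  obtain ⟨l, hl, h2⟩ := (D.mem_orb K).1 hx'
  apply h
  rw [D.mem_orb]
  refine ⟨l⁻¹ * k, K.mul_mem (K.inv_mem hl) hk, ?_⟩
  rw [show l⁻¹ * k * z * (l⁻¹ * k)⁻¹ = l⁻¹ * (k * z * k⁻¹) * l by group, h2]; group

lemma Geo.orb_pos (z : G) : 1 ≤ (D.orb K z).card :=
  Finset.card_pos.2 ⟨z, D.self_mem_orb K z⟩

lemma Geo.orb_one {z : G} (h : (D.orb K z).card = 1) : ∀ k ∈ K, z * k = k * z := by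
  intro k hk
  rw [Finset.card_eq_one] at h
  obtain ⟨w, hw⟩ := h
  have h1 := D.self_mem_orb K z
  have h2 : k * z * k⁻¹ ∈ D.orb K z := (D.mem_orb K).2 ⟨k, hk, rfl⟩
  rw [hw, Finset.mem_singleton] at h1 h2
  rw [← h1, mul_inv_eq_iff_eq_mul] at h2
  exact h2.symm

section counting

variable {K} {t : G}

lemma Geo.card_KO (htK : t ∈ K) (htN : t ∉ D.N) : Nat.card K = 2 * (D.KO K).card := by
  classical
  have h1 : Nat.card K = (Finset.univ.filter (fun k => k ∈ K)).card := by
    rw [Nat.card_eq_fintype_card, Fintype.card_subtype]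
  have h2 := D.half htK htN
  have h3 : D.KO K = Finset.univ.filter (fun k => k ∈ K ∧ k ∉ D.N) := by
    ext k; rw [D.mem_KO]; simp
  rw [h1, two_mul, h3]
  nth_rw 2 [h2]
  rw [← Finset.card_union_of_disjoint]
  · congr 1
    ext k
    simp only [Finset.mem_filter, Finset.mem_univ, true_and, Finset.mem_union]
    tauto
  · rw [Finset.disjoint_left]
    intro k hk hk'
    simp only [Finset.mem_filter, Finset.mem_univ, true_and] at hk hk'
    tauto


lemma Geo.sum_Z1 (hp' : ∀ u ∈ K, u ≠ 1 → u ^ p ≠ 1) : ∑ z ∈ D.Z1 K, (D.sO K z).card = (D.KO K).card := by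
  classical
  rw [D.sum_sO K (D.Z1 K) (Finset.filter_subset _ _)]
  congr 1
  ext k
  simp only [Finset.mem_biUnion, D.mem_KO]
  constructor
  · rintro ⟨z, -, h⟩
    rw [D.mem_sO] at h; tauto
  · rintro ⟨hk, hkN⟩
    have hk1 : k ≠ 1 := fun hh => hkN (hh ▸ D.N.one_mem)
    obtain ⟨z, hz, hzz, hR⟩ := (D.label hk1).resolve_left (hp' k hk hk1)
    have hm : k ∈ D.sO K z := (D.mem_sO K).2 ⟨hk, hkN, hR⟩
    exact ⟨z, (D.mem_Z1 K).2 ⟨D.mem_I.2 ⟨hz, hzz⟩, (Finset.card_pos.2 ⟨k, hm⟩).ne'⟩, hm⟩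

lemma Geo.sum_I (htK : t ∈ K) (htN : t ∉ D.N)
    (hp' : ∀ u ∈ K, u ≠ 1 → u ^ p ≠ 1) : ∑ z ∈ D.I, (D.sN K z).card + 1 = (D.KO K).card := by
  classical
  rw [D.sum_sN K _ le_rfl]
  have h3 : D.KO K = Finset.univ.filter (fun k => k ∈ K ∧ k ∉ D.N) := by
    ext k; rw [D.mem_KO]; simp
  rw [h3, D.half htK htN, ← Finset.card_insert_of_notMem (a := 1)]
  · congr 1
    ext k
    simp only [Finset.mem_insert, Finset.mem_biUnion, Finset.mem_filter, Finset.mem_univ, true_and]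
    constructor
    · rintro (rfl | ⟨z, -, h⟩)
      · exact ⟨K.one_mem, D.N.one_mem⟩
      · rw [D.mem_sN] at h; tauto
    · rintro ⟨hk, hkN⟩
      by_cases hk1 : k = 1
      · exact Or.inl hk1
      · right
        obtain ⟨z, hz, hzz, hR⟩ := (D.label hk1).resolve_left (hp' k hk hk1)
        exact ⟨z, D.mem_I.2 ⟨hz, hzz⟩, (D.mem_sN K).2 ⟨hk, hkN, hk1, hR⟩⟩
  · simp only [Finset.mem_biUnion, not_exists, not_and]
    intro z _ h
    rw [D.mem_sN] at h
    exact h.2.2.1 rfl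

lemma Geo.card_Z1 (htK : t ∈ K) (htN : t ∉ D.N)
    (hp' : ∀ u ∈ K, u ≠ 1 → u ^ p ≠ 1) : (D.Z1 K).card = 1 + ∑ z ∈ D.Z2 K, (D.sN K z).card := by
  classical
  have h1 := D.sum_Z1 hp'
  have h2 := D.sum_I htK htN hp'
  have h3 : ∑ z ∈ D.Z1 K, (D.sO K z).card = ∑ z ∈ D.Z1 K, (D.sN K z).card + (D.Z1 K).card := by
    rw [Finset.card_eq_sum_ones, ← Finset.sum_add_distrib]
    apply Finset.sum_congr rfl
    intro z hz
    exact D.sO_sN K ((D.mem_Z1 K).1 hz).2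
  have h4 : ∑ z ∈ D.I, (D.sN K z).card =
      ∑ z ∈ D.Z1 K, (D.sN K z).card + ∑ z ∈ D.Z2 K, (D.sN K z).card := by
    rw [← Finset.sum_filter_not_add_sum_filter D.I (fun z => (D.sO K z).card = 0)]
    rfl
  omega

/-- orbit contributions -/
lemma Geo.orb_Z1 (htK : t ∈ K) (htN : t ∉ D.N) {z : G} (hz : z ∈ D.Z1 K) :
    (D.orb K z).card * (D.sO K z).card = (D.KO K).card ∨
    2 * ((D.orb K z).card * (D.sO K z).card) = (D.KO K).card := by
  have h1 := D.orb_card K z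
  rw [D.card_KO htK htN] at h1
  rw [D.mem_Z1] at hz
  have h2 := D.sO_sN K hz.2
  have h3 := D.T_card K z
  rcases D.sC_card K hz.1 with h | ⟨h, -⟩
  · left
    rw [h, h3, ← h2] at h1
    nlinarith
  · right
    rw [h, h3, ← h2] at h1
    nlinarith

/-- the Frobenius case. -/
lemma Geo.frob (htK : t ∈ K) (htN : t ∉ D.N)
    (hp' : ∀ u ∈ K, u ≠ 1 → u ^ p ≠ 1)
    (htt : t * t = 1) (hA : ∀ k ∈ K, t * k = k * t → D.R t k) :
    ∃ z, z ≠ 1 ∧ z * z = 1 ∧ ∀ k ∈ K, z * k = k * z := by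
  classical
  have ht1 : t ≠ 1 := fun hh => htN (hh ▸ D.N.one_mem)
  have htI : t ∈ D.I := D.mem_I.2 ⟨ht1, htt⟩
  have htZ : t ∈ D.Z1 K := (D.mem_Z1 K).2 ⟨htI, (Finset.card_pos.2
    ⟨t, (D.mem_sO K).2 ⟨htK, htN, D.refl t⟩⟩).ne'⟩
  have hZ : D.orb K t = D.Z1 K := by
    apply Finset.Subset.antisymm (D.orb_sub_Z1 K htZ)
    intro w hw
    by_contra hwt
    have h1 := D.orb_card K t
    rw [D.card_KO htK htN] at h1
    have h2 := D.sO_sN K ((D.mem_Z1 K).1 htZ).2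
    have h3 := D.T_card K t
    have h4 : (D.sC K t).card = Nat.card (K ⊓ D.T t : Subgroup G) := by
      rcases D.sC_card K htI with h | ⟨-, h⟩
      · exact h
      · exact absurd hA h
    rw [h4, h3, ← h2] at h1
    have h5 := D.sum_orb_sO K t
    have h6 := D.sum_Z1 hp'
    have h7 : ∑ w ∈ insert w (D.orb K t), (D.sO K w).card ≤ ∑ z ∈ D.Z1 K, (D.sO K z).card := by
      apply Finset.sum_le_sum_of_subset
      exact Finset.insert_subset hw (D.orb_sub_Z1 K htZ)
    rw [Finset.sum_insert hwt, h5, h6] at h7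
    have h8 := ((D.mem_Z1 K).1 hw).2
    have h9 : (D.orb K t).card * (D.sO K t).card = (D.KO K).card := by nlinarith
    omega
  have hAll : ∀ z ∈ D.orb K t, ∀ k ∈ K, z * k = k * z → D.R z k := by
    intro z hz k hk hc
    obtain ⟨l, hl, rfl⟩ := (D.mem_orb K).1 hz
    have h1 := hA (l⁻¹ * k * l) (K.mul_mem (K.mul_mem (K.inv_mem hl) hk) hl) (by
      have := congrArg (fun x => l⁻¹ * x * l) hc
      simpa [mul_assoc] using this)
    have := D.conj l h1
    simpa [mul_assoc] using this
  have horbK : ∀ w ∈ D.orb K t, w ∈ K ∧ w ∉ D.N ∧ w ∈ D.I := by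
    intro w hw
    refine ⟨?_, ?_, D.orb_sub K htI hw⟩
    · obtain ⟨l, hl, rfl⟩ := (D.mem_orb K).1 hw
      rwa [Geo.conjK K hl]
    · obtain ⟨l, hl, rfl⟩ := (D.mem_orb K).1 hw
      rwa [D.conjN]
  set M := (D.Z2 K).biUnion (D.sN K) with hM
  have hMcard : M.card = ((D.orb K t).erase t).card := by
    rw [Finset.card_erase_of_mem (D.self_mem_orb K t), hZ, D.card_Z1 htK htN hp', hM,
      ← D.sum_sN K (D.Z2 K) (Finset.filter_subset _ _)]
    omega
  have hsub : ((D.orb K t).erase t).image (fun w => t * w) ⊆ M := by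
    intro m hm
    obtain ⟨w, hw, rfl⟩ := Finset.mem_image.1 hm
    rw [Finset.mem_erase] at hw
    obtain ⟨hwt, hw⟩ := hw
    obtain ⟨hwK, hwN, hwI⟩ := horbK w hw
    have hww := (D.mem_I.1 hwI).2
    have hwi : w⁻¹ = w := inv_eq_of_mul_eq_one_left hww
    have hti : t⁻¹ = t := inv_eq_of_mul_eq_one_left htt
    have hm1 : t * w ≠ 1 := by
      intro h; apply hwt; rw [← hti]; exact eq_inv_of_mul_eq_one_right h
    have hmK := K.mul_mem htK hwK
    have hmN : t * w ∈ D.N := by rw [Subgroup.mul_mem_iff_of_index_two D.idx]; tauto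
    obtain ⟨z, hz, hzz, hR⟩ := (D.label hm1).resolve_left (hp' _ hmK hm1)
    have hzI : z ∈ D.I := D.mem_I.2 ⟨hz, hzz⟩
    have hmi : (t * w)⁻¹ = w * t := by rw [_root_.mul_inv_rev, hwi, hti]
    rw [hM, Finset.mem_biUnion]
    refine ⟨z, ?_, (D.mem_sN K).2 ⟨hmK, hmN, hm1, hR⟩⟩
    rw [D.mem_Z2]
    refine ⟨hzI, ?_⟩
    by_contra hne
    have hzO : z ∈ D.orb K t := by rw [hZ, D.mem_Z1]; exact ⟨hzI, hne⟩
    have e1 : z * t = t * z := D.norm hz hzz hm1 hR (by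
      have : t * (t * w) * t⁻¹ = (t * w)⁻¹ := by rw [hmi, ← mul_assoc, htt, hti, one_mul]
      rw [this]; exact D.inv (D.refl _))
    have e2 : z * w = w * z := D.norm hz hzz hm1 hR (by
      have : w * (t * w) * w⁻¹ = (t * w)⁻¹ := by rw [hmi]; group
      rw [this]; exact D.inv (D.refl _))
    have e3 := D.uniq hz hzz ht1 htt (hAll z hzO t htK e1)
    have e4 := D.uniq hz hzz (D.mem_I.1 hwI).1 hww (hAll z hzO w hwK e2)
    exact hwt (e4.symm.trans e3)
  have hMeq : ((D.orb K t).erase t).image (fun w => t * w) = M := by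
    apply Finset.eq_of_subset_of_card_le hsub
    rw [Finset.card_image_of_injective _ (mul_right_injective t), hMcard]
  have hMconj : ∀ m ∈ M, ∀ k ∈ K, k * m * k⁻¹ ∈ M := by
    intro m hm k hk
    rw [hM, Finset.mem_biUnion] at *
    obtain ⟨z, hz, hmz⟩ := hm
    refine ⟨k * z * k⁻¹, D.Z2_conj K hk hz, ?_⟩
    rw [D.mem_sN] at *
    rw [Geo.conjK K hk, D.conjN, D.conjR, Ne, conj_eq_one_iff]
    exact hmz
  have hti : t⁻¹ = t := inv_eq_of_mul_eq_one_left htt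
  have htinv : ∀ m ∈ M, t * m * t⁻¹ = m⁻¹ := by
    intro m hm
    rw [← hMeq, Finset.mem_image] at hm
    obtain ⟨w, hw, rfl⟩ := hm
    have hwi : w⁻¹ = w := inv_eq_of_mul_eq_one_left
      (D.mem_I.1 (horbK w (Finset.mem_of_mem_erase hw)).2.2).2
    rw [_root_.mul_inv_rev, hwi, ← mul_assoc, htt, one_mul]
  have hwinv : ∀ w ∈ D.orb K t, ∀ m ∈ M, w * m * w⁻¹ = m⁻¹ := by
    intro w hw m hm
    obtain ⟨l, hl, rfl⟩ := (D.mem_orb K).1 hw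
    have h1 := htinv (l⁻¹ * m * l⁻¹⁻¹) (hMconj m hm _ (K.inv_mem hl))
    have h2 := congrArg (fun x => l * x * l⁻¹) h1
    simpa [mul_assoc] using h2
  by_cases hne : M.Nonempty
  · obtain ⟨m, hm⟩ := hne
    have hm' := hm
    rw [hM, Finset.mem_biUnion] at hm'
    obtain ⟨z, hz, hmz⟩ := hm'
    rw [D.mem_sN] at hmz
    obtain ⟨hmK, hmN, hm1, hR⟩ := hmz
    rw [D.mem_Z2] at hz
    have hzI := D.mem_I.1 hz.1
    have hmm : m * m ≠ 1 := by
      intro hmm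
      have hmi : m⁻¹ = m := inv_eq_of_mul_eq_one_left hmm
      have h1 := htinv m hm
      rw [hmi, mul_inv_eq_iff_eq_mul] at h1
      have h2 := hA m hmK h1
      have h3 := D.uniqI hm1 hz.1 htI hR h2
      rw [h3] at hz
      exact ((D.mem_Z1 K).1 htZ).2 hz.2
    refine ⟨z, hzI.1, hzI.2, fun k hk => D.norm hzI.1 hzI.2 hm1 hR ?_⟩
    have h1 := hMconj m hm k hk
    rw [← hMeq, Finset.mem_image] at h1
    obtain ⟨w, hw, hwk⟩ := h1
    have h2 := hwinv w (Finset.mem_of_mem_erase hw) m hm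
    have h3 : (t * w) * m * (t * w)⁻¹ = m := by
      have h4 := htinv m hm
      have h5 : t * m⁻¹ * t⁻¹ = m := by
        have := congrArg (·⁻¹) h4
        simpa [mul_assoc] using this
      calc (t * w) * m * (t * w)⁻¹ = t * (w * m * w⁻¹) * t⁻¹ := by group
        _ = m := by rw [h2, h5]
    rw [mul_inv_eq_iff_eq_mul] at h3
    rw [← hwk]
    rcases D.of_comm h3.symm with h | ⟨h, -⟩
    · exact h
    · exact absurd h hmm
  · rw [Finset.not_nonempty_iff_eq_empty] at hne
    rw [hne, Finset.card_empty, Finset.card_erase_of_mem (D.self_mem_orb K t)] at hMcard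
    have := D.orb_pos K t
    exact ⟨t, ht1, htt, D.orb_one K (by omega)⟩

end counting

end classification


section classB

variable {G : Type} [Group G] {p : ℕ} [Fintype G] (D : Geo G p) {K : Subgroup G} {t : G}

lemma Geo.orb_Z2 (htK : t ∈ K) (htN : t ∉ D.N) {z : G} (hz : z ∈ D.Z2 K) :
    (D.orb K z).card * ((D.sN K z).card + 1) = 2 * (D.KO K).card ∨
    (D.orb K z).card * (2 * ((D.sN K z).card + 1)) = 2 * (D.KO K).card := by
  have h1 := D.orb_card K z
  rw [D.card_KO htK htN] at h1
  rw [D.mem_Z2] at hz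
  have h3 := D.T_card K z
  rw [hz.2, zero_add] at h3
  rcases D.sC_card K hz.1 with h | ⟨h, -⟩
  · left
    rw [h, h3] at h1
    exact h1
  · right
    rw [h, h3] at h1
    exact h1

lemma Geo.caseB_sym (htK : t ∈ K) (htN : t ∉ D.N) (hp' : ∀ u ∈ K, u ≠ 1 → u ^ p ≠ 1)
    {x y α β : ℕ} (hx : 1 ≤ x) (hy : 1 ≤ y) (hxy : (D.Z1 K).card = x + y)
    (hα : 2 * (x * α) = (D.KO K).card) (hβ : 2 * (y * β) = (D.KO K).card) (h3 : 3 ≤ α) :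
    x = 1 := by
  classical
  have hS := D.card_Z1 htK htN hp'
  rw [hxy] at hS
  have hO : 0 < (D.KO K).card := Finset.card_pos.2 ⟨t, (D.mem_KO K).2 ⟨htK, htN⟩⟩
  set gO := (D.KO K).card with hgO
  set S := ∑ z ∈ D.Z2 K, (D.sN K z).card with hSd
  have hx6 : 6 * x ≤ gO := by nlinarith
  have hβ1 : 1 ≤ β := by
    rcases Nat.eq_zero_or_pos β with h | h
    · rw [h] at hβ; omega
    · exact h
  have hy2 : 2 * y ≤ gO := by nlinarith
  -- contributions
  have key : ∀ z ∈ D.Z2 K, (D.sN K z).card ≠ 0 →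
      gO ≤ 2 * ((D.orb K z).card * (D.sN K z).card) := by
    intro z hz hne
    have hpos : 1 ≤ (D.sN K z).card := Nat.one_le_iff_ne_zero.2 hne
    rcases D.orb_Z2 htK htN hz with h | h
    · rw [← hgO] at h
      nlinarith [D.orb_pos K z]
    · rw [← hgO] at h
      nlinarith [D.orb_pos K z]
  have hex : ∃ z ∈ D.Z2 K, (D.sN K z).card ≠ 0 := by
    by_contra hcon
    push Not at hcon
    have : S = 0 := Finset.sum_eq_zero hcon
    omega
  obtain ⟨z, hz, hne⟩ := hex
  have hk := key z hz hne
  have hsplit : S = (D.orb K z).card * (D.sN K z).card +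
      ∑ w ∈ D.Z2 K \ D.orb K z, (D.sN K w).card := by
    rw [hSd, ← D.sum_orb_sN K z, add_comm, Finset.sum_sdiff (D.orb_sub_Z2 K hz)]
  have hrest : ∑ w ∈ D.Z2 K \ D.orb K z, (D.sN K w).card = 0 := by
    apply Finset.sum_eq_zero
    intro w hw
    rw [Finset.mem_sdiff] at hw
    by_contra hwne
    have hk2 := key w hw.1 hwne
    have hle : ∑ v ∈ D.orb K w, (D.sN K v).card ≤ ∑ w ∈ D.Z2 K \ D.orb K z, (D.sN K w).card := by
      apply Finset.sum_le_sum_of_subset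
      intro v hv
      rw [Finset.mem_sdiff]
      exact ⟨D.orb_sub_Z2 K hw.1 hv, fun hv' => (Finset.disjoint_left.1 (D.orb_disj K hw.2)) hv' hv⟩
    rw [D.sum_orb_sN K w] at hle
    omega
  rw [hrest, add_zero] at hsplit
  have hβ' : β = 1 := by
    by_contra hb
    have : 2 ≤ β := by omega
    have : 4 * y ≤ gO := by nlinarith
    omega
  rw [hβ', mul_one] at hβ
  have hγpos : 1 ≤ (D.sN K z).card := Nat.one_le_iff_ne_zero.2 hne
  have hor := D.orb_Z2 htK htN hz
  rw [← hgO] at hor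
  generalize (D.sN K z).card = γ at *
  generalize (D.orb K z).card = v at *
  have hγ : γ = 1 := by
    by_contra hg
    have h2 : 2 ≤ γ := by omega
    have : 2 * gO ≤ 3 * (v * γ) := by
      rcases hor with h | h
      · nlinarith
      · nlinarith
    omega
  subst hγ
  rcases hor with h | h
  · omega
  · omega

lemma Geo.caseB (htK : t ∈ K) (htN : t ∉ D.N) (hp' : ∀ u ∈ K, u ≠ 1 → u ^ p ≠ 1)
    (htt : t * t = 1) (hA : ¬ ∀ k ∈ K, t * k = k * t → D.R t k) :
    ∃ z, z ≠ 1 ∧ z * z = 1 ∧ ∀ k ∈ K, z * k = k * z := by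
  classical
  have ht1 : t ≠ 1 := fun hh => htN (hh ▸ D.N.one_mem)
  have htI : t ∈ D.I := D.mem_I.2 ⟨ht1, htt⟩
  have htZ : t ∈ D.Z1 K := (D.mem_Z1 K).2 ⟨htI, (Finset.card_pos.2
    ⟨t, (D.mem_sO K).2 ⟨htK, htN, D.refl t⟩⟩).ne'⟩
  have hO : 0 < (D.KO K).card := Finset.card_pos.2 ⟨t, (D.mem_KO K).2 ⟨htK, htN⟩⟩
  have e1 : 2 * ((D.orb K t).card * (D.sO K t).card) = (D.KO K).card := by
    have h1 := D.orb_card K t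
    rw [D.card_KO htK htN] at h1
    have h2 := D.sO_sN K ((D.mem_Z1 K).1 htZ).2
    have h3 := D.T_card K t
    have h4 : (D.sC K t).card = 2 * Nat.card (K ⊓ D.T t : Subgroup G) := by
      rcases D.sC_card K htI with h | ⟨h, -⟩
      · exfalso
        apply hA
        intro k hk hc
        have hsub : (Finset.univ.filter (fun k => k ∈ K ⊓ D.T t)) ⊆ D.sC K t := by
          intro k hk
          rw [Finset.mem_filter, Subgroup.mem_inf] at hk
          exact (D.mem_sC K).2 ⟨hk.2.1, D.comm hk.2.2⟩
        have heq := Finset.eq_of_subset_of_card_le hsub (by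
          rw [h, Nat.card_eq_fintype_card, Fintype.card_subtype])
        have hk2 : k ∈ D.sC K t := (D.mem_sC K).2 ⟨hk, hc⟩
        rw [← heq, Finset.mem_filter, Subgroup.mem_inf] at hk2
        exact hk2.2.2
      · exact h
    rw [h4, h3, ← h2] at h1
    nlinarith
  have hsum := D.sum_Z1 hp'
  have hex : ∃ w ∈ D.Z1 K, w ∉ D.orb K t := by
    by_contra hcon
    push Not at hcon
    have : D.orb K t = D.Z1 K := Finset.Subset.antisymm (D.orb_sub_Z1 K htZ) hcon
    rw [← this, D.sum_orb_sO] at hsum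
    omega
  obtain ⟨w, hw, hwt⟩ := hex
  have hd := D.orb_disj K hwt
  have hsub : D.orb K t ∪ D.orb K w ⊆ D.Z1 K :=
    Finset.union_subset (D.orb_sub_Z1 K htZ) (D.orb_sub_Z1 K hw)
  have hsp := Finset.sum_sdiff (f := fun z => (D.sO K z).card) hsub
  rw [Finset.sum_union hd, D.sum_orb_sO, D.sum_orb_sO, hsum] at hsp
  have hpos : 0 < (D.orb K w).card * (D.sO K w).card :=
    Nat.mul_pos (D.orb_pos K w) (Nat.pos_of_ne_zero ((D.mem_Z1 K).1 hw).2)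
  have e2 : 2 * ((D.orb K w).card * (D.sO K w).card) = (D.KO K).card := by
    rcases D.orb_Z1 htK htN hw with h | h
    · omega
    · exact h
  have hz0 : ∑ z ∈ D.Z1 K \ (D.orb K t ∪ D.orb K w), (D.sO K z).card = 0 := by omega
  have hZ : D.Z1 K = D.orb K t ∪ D.orb K w := by
    apply Finset.Subset.antisymm _ hsub
    intro z hz
    by_contra hzn
    rw [Finset.sum_eq_zero_iff] at hz0
    exact ((D.mem_Z1 K).1 hz).2 (hz0 z (Finset.mem_sdiff.2 ⟨hz, hzn⟩))
  have hcard : (D.Z1 K).card = (D.orb K t).card + (D.orb K w).card := by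
    rw [hZ, Finset.card_union_of_disjoint hd]
  by_cases hall : ∀ s ∈ K, s ∉ D.N → s * s = 1
  · exact D.allinv htK htN hp' hall
  push Not at hall
  obtain ⟨s, hs, hsN, hss⟩ := hall
  have hs1 : s ≠ 1 := fun hh => hsN (hh ▸ D.N.one_mem)
  obtain ⟨z, hz, hzz, hR⟩ := (D.label hs1).resolve_left (hp' s hs hs1)
  have hm : s ∈ D.sO K z := (D.mem_sO K).2 ⟨hs, hsN, hR⟩
  have hzZ : z ∈ D.Z1 K :=
    (D.mem_Z1 K).2 ⟨D.mem_I.2 ⟨hz, hzz⟩, (Finset.card_pos.2 ⟨s, hm⟩).ne'⟩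
  have hc : 3 ≤ (D.sO K z).card := by
    by_contra hlt
    have h1 := ((D.mem_Z1 K).1 hzZ).2
    have h2 := D.sO_sN K h1
    have h3 := D.T_card K z
    have h4 : Nat.card (K ⊓ D.T z : Subgroup G) ∣ 4 := by
      have : (D.sO K z).card = 1 ∨ (D.sO K z).card = 2 := by omega
      rcases this with h | h
      · have : Nat.card (K ⊓ D.T z : Subgroup G) = 2 := by omega
        rw [this]; norm_num
      · have : Nat.card (K ⊓ D.T z : Subgroup G) = 4 := by omega
        rw [this]
    have hmem : s ∈ K ⊓ D.T z := ⟨hs, hR⟩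
    have h5 : s ^ 4 = 1 := by
      have h6 := pow_card_eq_one' (x := (⟨s, hmem⟩ : (K ⊓ D.T z : Subgroup G)))
      obtain ⟨m, hm⟩ := h4
      have h7 : (⟨s, hmem⟩ : (K ⊓ D.T z : Subgroup G)) ^ 4 = 1 := by
        rw [hm, pow_mul, h6, one_pow]
      have := congrArg Subtype.val h7
      simpa using this
    exact hss (D.order4 hsN h5)
  rw [hZ, Finset.mem_union] at hzZ
  rcases hzZ with h | h
  · have hcc : (D.sO K z).card = (D.sO K t).card := by
      obtain ⟨k, hk, rfl⟩ := (D.mem_orb K).1 h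
      exact D.sO_card_conj K hk
    rw [hcc] at hc
    have := D.caseB_sym htK htN hp' (D.orb_pos K t) (D.orb_pos K w) hcard e1 e2 hc
    exact ⟨t, ht1, htt, D.orb_one K this⟩
  · have hcc : (D.sO K z).card = (D.sO K w).card := by
      obtain ⟨k, hk, rfl⟩ := (D.mem_orb K).1 h
      exact D.sO_card_conj K hk
    rw [hcc] at hc
    have := D.caseB_sym htK htN hp' (D.orb_pos K w) (D.orb_pos K t)
      (by rw [hcard, add_comm]) e2 e1 hc
    have hwI := D.mem_I.1 ((D.mem_Z1 K).1 hw).1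
    exact ⟨w, hwI.1, hwI.2, D.orb_one K this⟩

theorem Geo.cls (hp : p.Prime) (hodd : Odd p) (K : Subgroup G) (t : G) (htK : t ∈ K)
    (htN : t ∉ D.N) (htt : t * t = 1) (hK : K ≠ ⊤) :
    ∃ z, z ≠ 1 ∧ z * z = 1 ∧ ∀ k ∈ K, z * k = k * z := by
  by_cases h : ∃ u ∈ K, u ≠ 1 ∧ u ^ p = 1
  · obtain ⟨u, huK, hu, hup⟩ := h
    exact absurd (Geo.pcase hp hodd D htK htN htt huK hu hup) hK
  · push Not at h
    by_cases hA : ∀ k ∈ K, t * k = k * t → D.R t k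
    · exact D.frob htK htN h htt hA
    · exact D.caseB htK htN h htt hA

end classB


section fieldfacts

variable {p n : ℕ} {F : Type} [Field F] [Fintype F]

lemma ff_ringChar (hp : p.Prime) (hF : Fintype.card F = p ^ 2 ^ n) : CharP F p := by
  have : Fact p.Prime := ⟨hp⟩
  obtain ⟨r, hr⟩ := CharP.exists F
  obtain ⟨m, hrp, hm⟩ := FiniteField.card F r
  have h1 : r ∣ p ^ 2 ^ n := by
    rw [← hF, hm]; exact dvd_pow_self _ m.pos.ne'
  have h2 := (Nat.prime_dvd_prime_iff_eq hrp hp).1 (hrp.dvd_of_dvd_pow h1)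
  rw [← h2]; exact hr

lemma ff_char_ne (hp : p.Prime) (hodd : Odd p) (hF : Fintype.card F = p ^ 2 ^ n) :
    ringChar F ≠ 2 := by
  have := ff_ringChar hp hF
  rw [ringChar.eq F p]
  rintro rfl
  exact absurd hodd (by decide)

lemma ff_two (hp : p.Prime) (hodd : Odd p) (hF : Fintype.card F = p ^ 2 ^ n) :
    (2 : F) ≠ 0 := Ring.two_ne_zero (ff_char_ne hp hodd hF)

lemma ff_mod8 (hodd : Odd p) (hn : 1 ≤ n) (hF : Fintype.card F = p ^ 2 ^ n) :
    Fintype.card F % 8 = 1 := by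
  obtain ⟨m, rfl⟩ : ∃ m, n = m + 1 := ⟨n - 1, by omega⟩
  rw [hF, pow_succ, mul_comm, pow_mul, Nat.pow_mod]
  have : p ^ 2 % 8 = 1 := by
    have h1 : p % 8 = 1 ∨ p % 8 = 3 ∨ p % 8 = 5 ∨ p % 8 = 7 := by
      rw [Nat.odd_iff] at hodd; omega
    rw [Nat.pow_mod]
    rcases h1 with h | h | h | h <;> rw [h]
  rw [this]; simp

lemma ff_neg_one (hodd : Odd p) (hn : 1 ≤ n) (hF : Fintype.card F = p ^ 2 ^ n) :
    IsSquare (-1 : F) := by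
  have := ff_mod8 hodd hn hF
  rw [FiniteField.isSquare_neg_one_iff]; omega

lemma ff_sq_two (hodd : Odd p) (hn : 1 ≤ n) (hF : Fintype.card F = p ^ 2 ^ n) :
    IsSquare (2 : F) := by
  have := ff_mod8 hodd hn hF
  rw [FiniteField.isSquare_two_iff]; omega

lemma ff_mul_nonsq (hp : p.Prime) (hodd : Odd p) (hF : Fintype.card F = p ^ 2 ^ n) {a b : F}
    (ha : ¬ IsSquare a) (hb : ¬ IsSquare b) : IsSquare (a * b) := by
  classical
  have hc := ff_char_ne hp hodd hF
  have ha0 : a ≠ 0 := by rintro rfl; exact ha (IsSquare.zero)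
  have hb0 : b ≠ 0 := by rintro rfl; exact hb (IsSquare.zero)
  rw [← quadraticChar_one_iff_isSquare (mul_ne_zero ha0 hb0), map_mul,
    quadraticChar_neg_one_iff_not_isSquare.2 ha, quadraticChar_neg_one_iff_not_isSquare.2 hb]
  norm_num

lemma ff_gen (hp : p.Prime) (hodd : Odd p) (hF : Fintype.card F = p ^ 2 ^ n)
    (S : Subfield F) {y : F} (hy : ¬ IsSquare y) (hyS : y ∈ S) : S = ⊤ := by
  classical
  have hc := ff_char_ne hp hodd hF
  have hy0 : y ≠ 0 := by rintro rfl; exact hy (IsSquare.zero)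
  have h1 : Fintype.card F = Fintype.card S ^ Module.finrank S F := Module.card_eq_pow_finrank
  set m := Module.finrank S F with hm
  have hmpos : m ≠ 0 := by
    have : 0 < m := Module.finrank_pos
    omega
  have h2 : Fintype.card S ∣ p ^ 2 ^ n := by
    rw [← hF, h1]; exact dvd_pow_self _ hmpos
  obtain ⟨d, -, hd⟩ := (Nat.dvd_prime_pow hp).1 h2
  have h3 : 2 ^ n = d * m := by
    rw [hF, hd, ← pow_mul] at h1
    exact Nat.pow_right_injective hp.two_le h1
  obtain ⟨e, -, he⟩ := (Nat.dvd_prime_pow Nat.prime_two).1 (Dvd.intro_left d h3.symm)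
  rcases Nat.eq_zero_or_pos e with h0 | hpos
  · rw [h0, pow_zero] at he
    rw [he, pow_one] at h1
    have h4 : (Finset.univ.filter (fun x => x ∈ S)) = (Finset.univ : Finset F) := by
      apply Finset.eq_of_subset_of_card_le (Finset.subset_univ _)
      rw [Finset.card_univ, h1, Fintype.card_subtype]
    rw [eq_top_iff]
    intro x _
    have : x ∈ (Finset.univ.filter (fun x => x ∈ S)) := by rw [h4]; exact Finset.mem_univ x
    exact (Finset.mem_filter.1 this).2
  · exfalso
    apply hy
    obtain ⟨f, rfl⟩ : ∃ f, e = f + 1 := ⟨e - 1, by omega⟩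
    set s := Fintype.card S ^ 2 ^ f with hs
    have hq : Fintype.card F = s * s := by
      rw [h1, he, hs, ← pow_add]; congr 1; ring
    have hys : y ^ s = y := by
      have : (⟨y, hyS⟩ : S) ^ s = ⟨y, hyS⟩ := FiniteField.pow_card_pow _ _
      simpa using congrArg Subtype.val this
    have hsodd : Odd s := by
      rw [hs, hd]; exact (hodd.pow).pow
    obtain ⟨k, hk⟩ := hsodd
    have h5 : y ^ (2 * k) = 1 := by
      rw [hk, pow_succ] at hys
      exact mul_right_cancel₀ hy0 (by rw [hys, one_mul])
    rw [FiniteField.isSquare_iff hc hy0, hq]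
    have : s * s / 2 = (2 * k) * (k + 1) := by
      rw [hk]
      have : (2 * k + 1) * (2 * k + 1) = 2 * ((2 * k) * (k + 1)) + 1 := by ring
      omega
    rw [this, pow_mul, h5, one_pow]

end fieldfacts


section matrices

variable {F : Type} [Field F]

/-- the matrix with the given entries -/
def gl (a b c d : F) (h : a * d - b * c ≠ 0) : GL (Fin 2) F :=
  Matrix.GeneralLinearGroup.mkOfDetNeZero !![a, b; c, d] (by rwa [Matrix.det_fin_two_of])

/-- the projection to `PGL₂` -/
def pj (A : GL (Fin 2) F) : ProjectiveGL2 F := QuotientGroup.mk A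

@[simp] lemma gl00 (a b c d : F) (h) : (gl a b c d h).val 0 0 = a := rfl
@[simp] lemma gl01 (a b c d : F) (h) : (gl a b c d h).val 0 1 = b := rfl
@[simp] lemma gl10 (a b c d : F) (h) : (gl a b c d h).val 1 0 = c := rfl
@[simp] lemma gl11 (a b c d : F) (h) : (gl a b c d h).val 1 1 = d := rfl

@[simp] lemma one00 : (1 : GL (Fin 2) F).val 0 0 = 1 := rfl
@[simp] lemma one01 : (1 : GL (Fin 2) F).val 0 1 = 0 := rfl
@[simp] lemma one10 : (1 : GL (Fin 2) F).val 1 0 = 0 := rfl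
@[simp] lemma one11 : (1 : GL (Fin 2) F).val 1 1 = 1 := rfl

@[simp] lemma gmul00 (A B : GL (Fin 2) F) : (A * B).val 0 0 =
    A.val 0 0 * B.val 0 0 + A.val 0 1 * B.val 1 0 := by
  simp [Matrix.mul_apply, Fin.sum_univ_two]
@[simp] lemma gmul01 (A B : GL (Fin 2) F) : (A * B).val 0 1 =
    A.val 0 0 * B.val 0 1 + A.val 0 1 * B.val 1 1 := by
  simp [Matrix.mul_apply, Fin.sum_univ_two]
@[simp] lemma gmul10 (A B : GL (Fin 2) F) : (A * B).val 1 0 =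
    A.val 1 0 * B.val 0 0 + A.val 1 1 * B.val 1 0 := by
  simp [Matrix.mul_apply, Fin.sum_univ_two]
@[simp] lemma gmul11 (A B : GL (Fin 2) F) : (A * B).val 1 1 =
    A.val 1 0 * B.val 0 1 + A.val 1 1 * B.val 1 1 := by
  simp [Matrix.mul_apply, Fin.sum_univ_two]

lemma gl_ext {A B : GL (Fin 2) F} (h1 : A.val 0 0 = B.val 0 0) (h2 : A.val 0 1 = B.val 0 1)
    (h3 : A.val 1 0 = B.val 1 0) (h4 : A.val 1 1 = B.val 1 1) : A = B := by
  apply Units.ext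
  ext i j
  fin_cases i <;> fin_cases j
  · exact h1
  · exact h2
  · exact h3
  · exact h4

lemma gdet (A : GL (Fin 2) F) : A.val 0 0 * A.val 1 1 - A.val 0 1 * A.val 1 0 ≠ 0 := by
  rw [← Matrix.det_fin_two]
  exact Matrix.GeneralLinearGroup.det_ne_zero A

lemma gl_eta (A : GL (Fin 2) F) :
    gl (A.val 0 0) (A.val 0 1) (A.val 1 0) (A.val 1 1) (gdet A) = A :=
  gl_ext rfl rfl rfl rfl

lemma gcomm {A B : GL (Fin 2) F} : A * B = B * A ↔
    A.val 0 1 * B.val 1 0 = A.val 1 0 * B.val 0 1 ∧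
    (A.val 0 0 - A.val 1 1) * B.val 0 1 = (B.val 0 0 - B.val 1 1) * A.val 0 1 ∧
    (A.val 0 0 - A.val 1 1) * B.val 1 0 = (B.val 0 0 - B.val 1 1) * A.val 1 0 := by
  constructor
  · intro h
    have h1 := congrArg (fun X : GL (Fin 2) F => X.val 0 0) h
    have h2 := congrArg (fun X : GL (Fin 2) F => X.val 0 1) h
    have h3 := congrArg (fun X : GL (Fin 2) F => X.val 1 0) h
    simp only [gmul00, gmul01, gmul10] at h1 h2 h3
    refine ⟨by linear_combination h1, by linear_combination h2, by linear_combination -h3⟩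
  · rintro ⟨h1, h2, h3⟩
    apply gl_ext <;> simp only [gmul00, gmul01, gmul10, gmul11]
    · linear_combination h1
    · linear_combination h2
    · linear_combination -h3
    · linear_combination -h1

lemma gcenter {A : GL (Fin 2) F} : A ∈ Subgroup.center (GL (Fin 2) F) ↔
    A.val 0 1 = 0 ∧ A.val 1 0 = 0 ∧ A.val 0 0 = A.val 1 1 := by
  rw [Subgroup.mem_center_iff]
  constructor
  · intro h
    have h1 := (gcomm.1 (h (gl 1 1 0 1 (by simp))))
    have h2 := (gcomm.1 (h (gl 1 0 1 1 (by simp))))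
    simp at h1 h2
    refine ⟨h2.1.symm, h1.1, by linear_combination h1.2.symm⟩
  · rintro ⟨h1, h2, h3⟩ B
    rw [gcomm, h1, h2, h3]; simp

lemma pj_mul (A B : GL (Fin 2) F) : pj (A * B) = pj A * pj B := rfl
lemma pj_inv (A : GL (Fin 2) F) : pj A⁻¹ = (pj A)⁻¹ := rfl
lemma pj_one : pj (1 : GL (Fin 2) F) = 1 := rfl
lemma pj_pow (A : GL (Fin 2) F) (k : ℕ) : pj (A ^ k) = pj A ^ k := rfl
lemma pj_surj (g : ProjectiveGL2 F) : ∃ A, pj A = g := QuotientGroup.mk_surjective g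

lemma pj_eq_one {A : GL (Fin 2) F} : pj A = 1 ↔
    A.val 0 1 = 0 ∧ A.val 1 0 = 0 ∧ A.val 0 0 = A.val 1 1 := by
  rw [← gcenter]; exact QuotientGroup.eq_one_iff A

/-- proportional matrices -/
lemma pj_eq' {A B : GL (Fin 2) F} : pj A = pj B ↔ ∃ s : F, s ≠ 0 ∧ B.val 0 0 = s * A.val 0 0 ∧
    B.val 0 1 = s * A.val 0 1 ∧ B.val 1 0 = s * A.val 1 0 ∧ B.val 1 1 = s * A.val 1 1 := by
  constructor
  · intro h
    have h1 : pj (A⁻¹ * B) = 1 := by rw [pj_mul, pj_inv, h, inv_mul_cancel]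
    rw [pj_eq_one] at h1
    have h2 : B = A * (A⁻¹ * B) := by group
    generalize A⁻¹ * B = C at h1 h2
    have hC := gdet C
    rw [h1.1, h1.2.2] at hC
    refine ⟨C.val 1 1, ?_, ?_⟩
    · intro h0; rw [h0] at hC; simp at hC
    rw [h2]
    simp only [gmul00, gmul01, gmul10, gmul11, h1.1, h1.2.1, h1.2.2]
    refine ⟨?_, ?_, ?_, ?_⟩ <;> ring
  · rintro ⟨s, hs, h1, h2, h3, h4⟩
    have : B = A * gl s 0 0 s (by simpa using hs) := by
      apply gl_ext <;> simp [h1, h2, h3, h4, mul_comm]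
    rw [this, pj_mul, (pj_eq_one (A := gl s 0 0 s _)).2 (by simp), mul_one]

lemma pj_eq {A B : GL (Fin 2) F} : pj A = pj B ↔
    A.val 1 1 * B.val 0 1 = A.val 0 1 * B.val 1 1 ∧
    A.val 0 0 * B.val 1 0 = A.val 1 0 * B.val 0 0 ∧
    A.val 1 1 * B.val 0 0 - A.val 0 1 * B.val 1 0 =
      A.val 0 0 * B.val 1 1 - A.val 1 0 * B.val 0 1 := by
  constructor
  · intro h
    obtain ⟨s, -, h1, h2, h3, h4⟩ := pj_eq'.1 h
    rw [h1, h2, h3, h4]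
    refine ⟨?_, ?_, ?_⟩ <;> ring
  · rintro ⟨h1, h2, h3⟩
    have hA := gdet A
    set C := gl (A.val 1 1) (-A.val 0 1) (-A.val 1 0) (A.val 0 0) (by
      intro h; apply hA; linear_combination h) with hC
    have e1 : pj (C * A) = 1 := by
      rw [pj_eq_one, hC]; simp; refine ⟨?_, ?_, ?_⟩ <;> ring
    have e2 : pj (C * B) = 1 := by
      rw [pj_eq_one, hC]; simp
      refine ⟨by linear_combination h1, by linear_combination h2, by linear_combination h3⟩
    rw [pj_mul] at e1 e2
    exact mul_left_cancel (e1.trans e2.symm)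

/-- commuting lifts -/
def RR (g h : ProjectiveGL2 F) : Prop := ∀ A B : GL (Fin 2) F, pj A = g → pj B = h → A * B = B * A

lemma RR_mk {A B : GL (Fin 2) F} : RR (pj A) (pj B) ↔ A * B = B * A := by
  constructor
  · intro h; exact h A B rfl rfl
  · intro h A' B' hA hB
    obtain ⟨s, hs, h1, h2, h3, h4⟩ := pj_eq'.1 hA.symm
    obtain ⟨r, hr, k1, k2, k3, k4⟩ := pj_eq'.1 hB.symm
    rw [gcomm] at *
    rw [h1, h2, h3, h4, k1, k2, k3, k4]
    obtain ⟨e1, e2, e3⟩ := h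
    refine ⟨by linear_combination (s * r) * e1, by linear_combination (s * r) * e2,
      by linear_combination (s * r) * e3⟩

/-- the trace -/
lemma pj_sq {A : GL (Fin 2) F} (h1 : pj A ≠ 1) : pj A * pj A = 1 ↔ A.val 1 1 = - A.val 0 0 := by
  rw [← pj_mul, pj_eq_one]
  rw [Ne, pj_eq_one] at h1
  simp only [gmul00, gmul01, gmul10, gmul11]
  constructor
  · rintro ⟨e1, e2, e3⟩
    by_contra hne
    have hne' : A.val 0 0 + A.val 1 1 ≠ 0 := fun h => hne (by linear_combination h)
    apply h1
    refine ⟨?_, ?_, ?_⟩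
    · apply mul_left_cancel₀ hne'; linear_combination e1
    · apply mul_left_cancel₀ hne'; linear_combination e2
    · apply mul_left_cancel₀ hne'; linear_combination e3
  · intro h
    rw [h]; refine ⟨?_, ?_, ?_⟩ <;> ring

lemma comm_cases {A B : GL (Fin 2) F} (h : pj A * pj B = pj B * pj A) :
    A * B = B * A ∨ ((A * B).val 0 0 = -(B * A).val 0 0 ∧ (A * B).val 0 1 = -(B * A).val 0 1 ∧
      (A * B).val 1 0 = -(B * A).val 1 0 ∧ (A * B).val 1 1 = -(B * A).val 1 1) := by
  rw [← pj_mul, ← pj_mul] at h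
  obtain ⟨s, hs, h1, h2, h3, h4⟩ := pj_eq'.1 h.symm
  have hd : s * s = 1 := by
    have hne := mul_ne_zero (gdet A) (gdet B)
    apply mul_right_cancel₀ hne
    have e : (A * B).val 0 0 * (A * B).val 1 1 - (A * B).val 0 1 * (A * B).val 1 0 =
        s * s * ((B * A).val 0 0 * (B * A).val 1 1 - (B * A).val 0 1 * (B * A).val 1 0) := by
      rw [h1, h2, h3, h4]; ring
    simp only [gmul00, gmul01, gmul10, gmul11] at e
    linear_combination -e
  rcases mul_self_eq_one_iff.1 hd with rfl | rfl
  · left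
    apply gl_ext
    · simpa using h1
    · simpa using h2
    · simpa using h3
    · simpa using h4
  · right
    refine ⟨by rw [h1]; ring, by rw [h2]; ring, by rw [h3]; ring, by rw [h4]; ring⟩

lemma anti_trace (h2 : (2 : F) ≠ 0) {A B : GL (Fin 2) F}
    (h : (A * B).val 0 0 = -(B * A).val 0 0 ∧ (A * B).val 0 1 = -(B * A).val 0 1 ∧
      (A * B).val 1 0 = -(B * A).val 1 0 ∧ (A * B).val 1 1 = -(B * A).val 1 1) :
    A.val 1 1 = - A.val 0 0 := by
  obtain ⟨e1, e2, e3, e4⟩ := h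
  simp only [gmul00, gmul01, gmul10, gmul11] at e1 e2 e3 e4
  apply mul_left_cancel₀ (mul_ne_zero h2 (gdet B))
  linear_combination B.val 1 1 * e1 - B.val 1 0 * e2 - B.val 0 1 * e3 + B.val 0 0 * e4

lemma sq_of_trace {A : GL (Fin 2) F} (h : A.val 1 1 = - A.val 0 0) : pj A * pj A = 1 := by
  rw [← pj_mul, pj_eq_one]
  simp only [gmul00, gmul01, gmul10, gmul11]
  rw [h]; refine ⟨?_, ?_, ?_⟩ <;> ring

end matrices


section pglfacts

variable {F : Type} [Field F]

lemma RR_trans {g h k : ProjectiveGL2 F} (hg : g ≠ 1) (h1 : RR g h) (h2 : RR g k) : RR h k := by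
  obtain ⟨A, rfl⟩ := pj_surj g
  obtain ⟨B, rfl⟩ := pj_surj h
  obtain ⟨C, rfl⟩ := pj_surj k
  rw [RR_mk, gcomm] at *
  rw [Ne, pj_eq_one] at hg
  obtain ⟨a1, a2, a3⟩ := h1
  obtain ⟨b1, b2, b3⟩ := h2
  by_cases hb : A.val 0 1 = 0
  · by_cases hc : A.val 1 0 = 0
    · have hd : A.val 0 0 - A.val 1 1 ≠ 0 := fun h => hg ⟨hb, hc, by linear_combination h⟩
      have e1 : B.val 0 1 = 0 := by apply mul_left_cancel₀ hd; rw [a2, hb]; ring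
      have e2 : B.val 1 0 = 0 := by apply mul_left_cancel₀ hd; rw [a3, hc]; ring
      have e3 : C.val 0 1 = 0 := by apply mul_left_cancel₀ hd; rw [b2, hb]; ring
      have e4 : C.val 1 0 = 0 := by apply mul_left_cancel₀ hd; rw [b3, hc]; ring
      rw [e1, e2, e3, e4]; simp
    · refine ⟨?_, ?_, ?_⟩ <;> apply mul_left_cancel₀ (mul_ne_zero hc hc)
      · linear_combination (-A.val 1 0 * C.val 1 0) * a1 + (A.val 1 0 * B.val 1 0) * b1
      · linear_combination (A.val 1 0 * C.val 0 1) * (-a3) + (A.val 0 0 - A.val 1 1) * B.val 1 0 * (-b1) + (A.val 1 0 * B.val 0 1) * b3 + (A.val 0 0 - A.val 1 1) * C.val 1 0 * a1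
      · linear_combination (A.val 1 0 * C.val 1 0) * (-a3) + (A.val 1 0 * B.val 1 0) * b3
  · refine ⟨?_, ?_, ?_⟩ <;> apply mul_left_cancel₀ (mul_ne_zero hb hb)
    · linear_combination (-A.val 0 1 * C.val 0 1) * a1 + (A.val 0 1 * B.val 0 1) * b1
    · linear_combination (A.val 0 1 * C.val 0 1) * (-a2) + (A.val 0 1 * B.val 0 1) * b2
    · linear_combination (A.val 0 1 * C.val 1 0) * (-a2) + (A.val 0 1 * B.val 1 0) * b2 + (A.val 0 0 - A.val 1 1) * B.val 0 1 * b1 - (A.val 0 0 - A.val 1 1) * C.val 0 1 * a1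

lemma RR_of_comm (h2 : (2 : F) ≠ 0) {g h : ProjectiveGL2 F} (hc : g * h = h * g) :
    RR g h ∨ (g * g = 1 ∧ h * h = 1) := by
  obtain ⟨A, rfl⟩ := pj_surj g
  obtain ⟨B, rfl⟩ := pj_surj h
  rcases comm_cases hc with h | h
  · left; rwa [RR_mk]
  · right
    refine ⟨sq_of_trace (anti_trace h2 h), sq_of_trace (anti_trace h2 (A := B) (B := A) ?_)⟩
    obtain ⟨e1, e2, e3, e4⟩ := h
    rw [e1, e2, e3, e4]; simp

lemma RR_anti {z k l : ProjectiveGL2 F} (hk : z * k = k * z) (hl : z * l = l * z)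
    (h1 : ¬ RR z k) (h2 : ¬ RR z l) : RR z (k * l) := by
  obtain ⟨A, rfl⟩ := pj_surj z
  obtain ⟨B, rfl⟩ := pj_surj k
  obtain ⟨C, rfl⟩ := pj_surj l
  rw [RR_mk] at h1 h2
  have e1 := (comm_cases hk).resolve_left h1
  have e2 := (comm_cases hl).resolve_left h2
  rw [← pj_mul, RR_mk]
  have f1 : (A * B).val = - (B * A).val := by
    ext i j; fin_cases i <;> fin_cases j
    · exact e1.1
    · exact e1.2.1
    · exact e1.2.2.1
    · exact e1.2.2.2
  have f2 : (A * C).val = - (C * A).val := by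
    ext i j; fin_cases i <;> fin_cases j
    · exact e2.1
    · exact e2.2.1
    · exact e2.2.2.1
    · exact e2.2.2.2
  apply Units.ext
  simp only [Units.val_mul] at *
  rw [← mul_assoc, f1, neg_mul, mul_assoc, f2, mul_neg, neg_neg, mul_assoc]

lemma RR_uniq (h2 : (2 : F) ≠ 0) {z w : ProjectiveGL2 F} (hz : z ≠ 1) (hzz : z * z = 1)
    (hw : w ≠ 1) (hww : w * w = 1) (h : RR z w) : z = w := by
  obtain ⟨A, rfl⟩ := pj_surj z
  obtain ⟨B, rfl⟩ := pj_surj w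
  rw [pj_sq hz] at hzz
  rw [pj_sq hw] at hww
  rw [RR_mk, gcomm] at h
  obtain ⟨e1, e2, e3⟩ := h
  rw [pj_eq]
  rw [hzz, hww] at *
  refine ⟨?_, ?_, ?_⟩
  · apply mul_left_cancel₀ h2; linear_combination -e2
  · apply mul_left_cancel₀ h2; linear_combination e3
  · linear_combination -e1

/-- powers in characteristic `p` -/
lemma pow_p (h2 : (2 : F) ≠ 0) {p : ℕ} [CharP F p] (hp : p.Prime) (hodd : Odd p)
    (A : GL (Fin 2) F) :
    ∃ δ x : F, (δ = 0 ↔ (A.val 0 0 - A.val 1 1) ^ 2 + 4 * A.val 0 1 * A.val 1 0 = 0) ∧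
      (A ^ p).val = x • (1 : Matrix (Fin 2) (Fin 2) F) + δ ^ ((p - 1) / 2) •
        (A.val - ((A.val 0 0 + A.val 1 1) / 2) • 1) := by
  have : Fact p.Prime := ⟨hp⟩
  set x := (A.val 0 0 + A.val 1 1) / 2 with hx
  have hxx : 2 * x = A.val 0 0 + A.val 1 1 := by rw [hx]; field_simp
  set E : Matrix (Fin 2) (Fin 2) F := A.val - x • 1 with hE
  set δ := (A.val 0 0 - A.val 1 1) ^ 2 / 4 + A.val 0 1 * A.val 1 0 with hδ
  have h4 : (4 : F) ≠ 0 := by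
    have := mul_ne_zero h2 h2
    intro h; apply this; linear_combination h
  have h4δ : 4 * δ = (A.val 0 0 - A.val 1 1) ^ 2 + 4 * A.val 0 1 * A.val 1 0 := by
    rw [hδ]; field_simp
  refine ⟨δ, x ^ p, ?_, ?_⟩
  · rw [← h4δ]
    constructor
    · intro h; rw [h, mul_zero]
    · intro h; exact (mul_eq_zero.1 h).resolve_left h4
  have hEE : E * E = δ • 1 := by
    ext i j
    fin_cases i <;> fin_cases j <;>
      simp [hE, Matrix.mul_apply, Fin.sum_univ_two]
    · apply mul_left_cancel₀ h4
      linear_combination (-h4δ) + (2 * x + A.val 1 1 - 3 * A.val 0 0) * hxx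
    · linear_combination (-A.val 0 1) * hxx
    · linear_combination (-A.val 1 0) * hxx
    · apply mul_left_cancel₀ h4
      linear_combination (-h4δ) + (2 * x + A.val 0 0 - 3 * A.val 1 1) * hxx
  have hA : A.val = x • (1 : Matrix (Fin 2) (Fin 2) F) + E := by rw [hE]; abel
  have hcom : Commute (x • (1 : Matrix (Fin 2) (Fin 2) F)) E := by
    rw [Commute, SemiconjBy]; simp
  rw [Units.val_pow_eq_pow_val]
  conv_lhs => rw [hA]
  rw [add_pow_char_of_commute _ hcom]
  congr 1
  · rw [smul_pow, one_pow]
  · obtain ⟨m, rfl⟩ := hodd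
    have : (2 * m + 1 - 1) / 2 = m := by omega
    rw [this, pow_succ, pow_mul, pow_two, hEE, smul_pow, one_pow, smul_mul_assoc, one_mul]

lemma RR_label (h2 : (2 : F) ≠ 0) {p : ℕ} [CharP F p] (hp : p.Prime) (hodd : Odd p)
    {g : ProjectiveGL2 F} (hg : g ≠ 1) : g ^ p = 1 ∨ ∃ z, z ≠ 1 ∧ z * z = 1 ∧ RR z g := by
  obtain ⟨A, rfl⟩ := pj_surj g
  obtain ⟨δ, x, hδ, hpow⟩ := pow_p h2 hp hodd A
  by_cases h : δ = 0
  · left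
    have hne : (p - 1) / 2 ≠ 0 := by
      have := hp.two_le
      obtain ⟨m, rfl⟩ := hodd
      omega
    rw [h, zero_pow hne, zero_smul, add_zero] at hpow
    rw [← pj_pow, pj_eq_one, hpow]
    simp
  · right
    rw [hδ] at h
    refine ⟨pj (gl (A.val 0 0 - A.val 1 1) (2 * A.val 0 1) (2 * A.val 1 0)
      (-(A.val 0 0 - A.val 1 1)) (by intro h'; apply h; linear_combination -h')), ?_, ?_, ?_⟩
    · rw [Ne, pj_eq_one]
      simp only [gl00, gl01, gl10, gl11]
      rintro ⟨e1, e2, e3⟩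
      have e4 : A.val 0 0 - A.val 1 1 = 0 := by
        apply mul_left_cancel₀ h2; linear_combination e3
      apply h
      rw [e4]; linear_combination 2 * e1 * A.val 1 0
    · exact sq_of_trace rfl
    · rw [RR_mk, gcomm]
      simp only [gl00, gl01, gl10, gl11]
      refine ⟨?_, ?_, ?_⟩ <;> ring

lemma disc_zero (h2 : (2 : F) ≠ 0) {p : ℕ} [CharP F p] (hp : p.Prime) (hodd : Odd p)
    {A : GL (Fin 2) F} (hg : pj A ≠ 1) (hp1 : pj A ^ p = 1) :
    (A.val 0 0 - A.val 1 1) ^ 2 + 4 * A.val 0 1 * A.val 1 0 = 0 := by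
  obtain ⟨δ, x, hδ, hpow⟩ := pow_p h2 hp hodd A
  rw [← hδ]
  by_contra h
  rw [← pj_pow, pj_eq_one, hpow] at hp1
  have hne := pow_ne_zero ((p - 1) / 2) h
  generalize δ ^ ((p - 1) / 2) = ε at *
  simp at hp1
  apply hg
  rw [pj_eq_one]
  refine ⟨hp1.1.resolve_left hne, hp1.2.1.resolve_left hne, ?_⟩
  rcases hp1.2.2 with h | h
  · linear_combination h
  · exact absurd h hne

end pglfacts


section pglN

variable {F : Type} [Field F]

/-- determinant -/
def dt (A : GL (Fin 2) F) : F := A.val 0 0 * A.val 1 1 - A.val 0 1 * A.val 1 0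

lemma dt_ne (A : GL (Fin 2) F) : dt A ≠ 0 := gdet A

lemma dt_mul (A B : GL (Fin 2) F) : dt (A * B) = dt A * dt B := by
  simp only [dt, gmul00, gmul01, gmul10, gmul11]; ring

lemma dt_one : dt (1 : GL (Fin 2) F) = 1 := by simp [dt]

lemma dt_inv (A : GL (Fin 2) F) : dt A⁻¹ = (dt A)⁻¹ := by
  apply eq_inv_of_mul_eq_one_left
  rw [← dt_mul, inv_mul_cancel, dt_one]

/-- the classes of matrices of square determinant -/
def NN (F : Type) [Field F] : Subgroup (ProjectiveGL2 F) where
  carrier := {g | ∃ A : GL (Fin 2) F, pj A = g ∧ IsSquare (dt A)}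
  one_mem' := ⟨1, rfl, by rw [dt_one]; exact IsSquare.one⟩
  mul_mem' := by
    rintro _ _ ⟨A, rfl, hA⟩ ⟨B, rfl, hB⟩
    exact ⟨A * B, rfl, by rw [dt_mul]; exact hA.mul hB⟩
  inv_mem' := by
    rintro _ ⟨A, rfl, hA⟩
    exact ⟨A⁻¹, rfl, by rw [dt_inv]; exact hA.inv⟩

lemma mem_NN {A : GL (Fin 2) F} : pj A ∈ NN F ↔ IsSquare (dt A) := by
  constructor
  · rintro ⟨B, hB, h⟩
    obtain ⟨s, hs, h1, h2, h3, h4⟩ := pj_eq'.1 hB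
    have : dt A = s * s * dt B := by
      simp only [dt, h1, h2, h3, h4]; ring
    rw [this]
    exact (IsSquare.mul_self s).mul h
  · intro h; exact ⟨A, rfl, h⟩

lemma NN_index (hns : ∃ a : F, ¬ IsSquare a)
    (hm : ∀ a b : F, ¬ IsSquare a → ¬ IsSquare b → IsSquare (a * b)) : (NN F).index = 2 := by
  obtain ⟨a, ha⟩ := hns
  have ha0 : a ≠ 0 := by rintro rfl; exact ha IsSquare.zero
  rw [Subgroup.index_eq_two_iff]
  refine ⟨pj (gl a 0 0 1 (by simpa using ha0)), fun g => ?_⟩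
  obtain ⟨A, rfl⟩ := pj_surj g
  rw [← pj_mul, mem_NN, mem_NN, dt_mul]
  have : dt (gl a 0 0 1 (by simpa using ha0)) = a := by simp [dt]
  rw [this]
  by_cases h : IsSquare (dt A)
  · right
    refine ⟨h, fun h' => ha ?_⟩
    have := h.inv.mul h'
    rwa [← mul_assoc, inv_mul_cancel₀ (dt_ne A), one_mul] at this
  · left
    exact ⟨hm _ _ h ha, h⟩

lemma NN_order4 (h2 : (2 : F) ≠ 0) (hs2 : IsSquare (2 : F)) {s : ProjectiveGL2 F} (hs : s ∉ NN F)
    (h4 : s ^ 4 = 1) : s * s = 1 := by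
  have hs1 : s ≠ 1 := by rintro rfl; exact hs (NN F).one_mem
  obtain ⟨A, rfl⟩ := pj_surj s
  by_contra hne
  have h4' : pj (A * A) * pj (A * A) = 1 := by
    rw [← h4, pj_mul]; simp only [pow_succ, pow_zero, one_mul, mul_assoc]
  rw [← pj_mul] at hne
  have e := (pj_sq hne).1 h4'
  simp only [gmul00, gmul11] at e
  apply hs
  rw [mem_NN]
  have : dt A = (A.val 0 0 + A.val 1 1) * (A.val 0 0 + A.val 1 1) * 2⁻¹ := by
    rw [eq_mul_inv_iff_mul_eq₀ h2, dt]
    linear_combination -e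
  rw [this]
  exact (IsSquare.mul_self _).mul hs2.inv

lemma NN_trace {t : ProjectiveGL2 F} (ht : t ∉ NN F) (htt : t * t = 1) :
    ∃ A : GL (Fin 2) F, pj A = t ∧ A.val 1 1 = - A.val 0 0 ∧ ¬ IsSquare (dt A) := by
  have ht1 : t ≠ 1 := by rintro rfl; exact ht (NN F).one_mem
  obtain ⟨A, rfl⟩ := pj_surj t
  exact ⟨A, rfl, (pj_sq ht1).1 htt, fun h => ht (mem_NN.2 h)⟩

lemma NN_centr (hs1 : IsSquare (-1 : F)) {t : ProjectiveGL2 F} (ht : t ∉ NN F)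
    (htt : t * t = 1) : ∃ k, RR t k ∧ k ≠ 1 ∧ k ≠ t := by
  obtain ⟨A, rfl, hA, hd⟩ := NN_trace ht htt
  have ht1 : pj A ≠ 1 := by intro h; exact ht (h ▸ (NN F).one_mem)
  rw [dt, hA] at hd
  have hne : (1 + A.val 0 0) * (1 - A.val 0 0) - A.val 0 1 * A.val 1 0 ≠ 0 := by
    intro h; apply hd
    convert hs1 using 1
    linear_combination h
  refine ⟨pj (gl (1 + A.val 0 0) (A.val 0 1) (A.val 1 0) (1 - A.val 0 0) hne), ?_, ?_, ?_⟩
  · rw [RR_mk, gcomm]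
    simp only [gl00, gl01, gl10, gl11, hA]
    refine ⟨?_, ?_, ?_⟩ <;> ring
  · rw [Ne, pj_eq_one] at ht1 ⊢
    simp only [gl00, gl01, gl10, gl11]
    rintro ⟨e1, e2, e3⟩
    exact ht1 ⟨e1, e2, by rw [hA]; linear_combination e3⟩
  · rw [Ne, pj_eq]
    simp only [gl00, gl01, gl10, gl11, hA]
    rintro ⟨e1, e2, e3⟩
    rw [Ne, pj_eq_one] at ht1
    apply ht1
    refine ⟨by linear_combination e1, by linear_combination e2, ?_⟩
    rw [hA]
    linear_combination e3

lemma PGL_center (h2 : (2 : F) ≠ 0) {z : ProjectiveGL2 F} (hz : z ≠ 1) : ∃ k, z * k ≠ k * z := by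
  by_contra hcon
  push Not at hcon
  apply hz
  obtain ⟨A, rfl⟩ := pj_surj z
  rw [pj_eq_one]
  have key : ∀ B : GL (Fin 2) F, B.val 1 1 ≠ -B.val 0 0 → A * B = B * A := by
    intro B hB
    rcases comm_cases (hcon (pj B)) with h | h
    · exact h
    · exfalso
      apply hB
      apply anti_trace h2 (A := B) (B := A)
      obtain ⟨e1, e2, e3, e4⟩ := h
      rw [e1, e2, e3, e4]; simp
  have hne : (1 : F) ≠ -1 := by
    intro h; apply h2; linear_combination h
  have h1 := gcomm.1 (key (gl 1 1 0 1 (by simp)) (by simpa using hne))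
  have h3 := gcomm.1 (key (gl 1 0 1 1 (by simp)) (by simpa using hne))
  simp at h1 h3
  exact ⟨h3.1, h1.1.symm, by linear_combination h1.2⟩

/-- upper unipotents -/
def uU (x : F) : GL (Fin 2) F := gl 1 x 0 1 (by simp)
/-- lower unipotents -/
def uL (x : F) : GL (Fin 2) F := gl 1 0 x 1 (by simp)

lemma gen_SL {K : Subgroup (ProjectiveGL2 F)} (hU : ∀ x, pj (uU x : GL (Fin 2) F) ∈ K)
    (hL : ∀ x, pj (uL x : GL (Fin 2) F) ∈ K) (A : GL (Fin 2) F) (hA : dt A = 1) : pj A ∈ K := by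
  have key : ∀ A : GL (Fin 2) F, dt A = 1 → A.val 1 0 ≠ 0 → pj A ∈ K := by
    intro A hA hc
    have : A = uU ((A.val 0 0 - 1) / A.val 1 0) * uL (A.val 1 0) *
        uU ((A.val 1 1 - 1) / A.val 1 0) := by
      rw [dt] at hA
      apply gl_ext <;> simp [uU, uL] <;> field_simp
      · ring
      · linear_combination -hA
      · ring
    rw [this, pj_mul, pj_mul]
    exact K.mul_mem (K.mul_mem (hU _) (hL _)) (hU _)
  by_cases hc : A.val 1 0 = 0
  · have h1 : pj (uL 1 * A) ∈ K := by
      apply key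
      · rw [dt_mul, hA]; simp [uL, dt]
      · simp [uL, hc]
        intro h
        rw [dt, h, hc] at hA
        simp at hA
    rw [pj_mul] at h1
    exact (K.mul_mem_cancel_left (hL 1)).1 h1
  · exact key A hA hc

lemma gen_all {K : Subgroup (ProjectiveGL2 F)}
    (hm : ∀ a b : F, ¬ IsSquare a → ¬ IsSquare b → IsSquare (a * b))
    (hU : ∀ x, pj (uU x : GL (Fin 2) F) ∈ K)
    (hL : ∀ x, pj (uL x : GL (Fin 2) F) ∈ K) {T : GL (Fin 2) F} (hT : pj T ∈ K)
    (hTd : ¬ IsSquare (dt T)) : K = ⊤ := by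
  have key : ∀ A : GL (Fin 2) F, IsSquare (dt A) → pj A ∈ K := by
    rintro A ⟨r, hr⟩
    have hr0 : r ≠ 0 := by
      rintro rfl; exact dt_ne A (by rw [hr]; simp)
    have hd : (r⁻¹ * A.val 0 0) * (r⁻¹ * A.val 1 1) - (r⁻¹ * A.val 0 1) * (r⁻¹ * A.val 1 0) = 1 := by
      rw [dt] at hr
      field_simp
      linear_combination hr
    have h1 : pj A = pj (gl (r⁻¹ * A.val 0 0) (r⁻¹ * A.val 0 1) (r⁻¹ * A.val 1 0)
        (r⁻¹ * A.val 1 1) (by rw [hd]; exact one_ne_zero)) := by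
      rw [pj_eq']
      exact ⟨r⁻¹, inv_ne_zero hr0, rfl, rfl, rfl, rfl⟩
    rw [h1]
    apply gen_SL hU hL
    exact hd
  rw [eq_top_iff]
  intro g _
  obtain ⟨A, rfl⟩ := pj_surj g
  by_cases h : IsSquare (dt A)
  · exact key A h
  · have h1 := key (T * A) (by rw [dt_mul]; exact hm _ _ hTd h)
    rw [pj_mul] at h1
    exact (K.mul_mem_cancel_left hT).1 h1

end pglN


section pglunip

variable {F : Type} [Field F]

lemma uU_add (x y : F) : uU (x + y) = uU x * uU y := by
  apply gl_ext <;> simp [uU]; ring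

lemma uU_neg (x : F) : uU (-x) = (uU x)⁻¹ := by
  apply eq_inv_of_mul_eq_one_left
  apply gl_ext <;> simp [uU]

/-- the multipliers of the additive group of upper unipotents in `K` -/
def multK [Fintype F] (K : Subgroup (ProjectiveGL2 F)) : Subfield F :=
  { carrier := {s | ∀ x, pj (uU x : GL (Fin 2) F) ∈ K → pj (uU (s * x) : GL (Fin 2) F) ∈ K}
    one_mem' := fun x hx => by simpa using hx
    zero_mem' := fun x _ => by
      have : (uU (0 * x) : GL (Fin 2) F) = 1 := by apply gl_ext <;> simp [uU]
      rw [this]; exact K.one_mem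
    mul_mem' := fun {a b} ha hb x hx => by
      rw [mul_assoc]; exact ha _ (hb x hx)
    add_mem' := fun {a b} ha hb x hx => by
      rw [add_mul, uU_add, pj_mul]; exact K.mul_mem (ha x hx) (hb x hx)
    neg_mem' := fun {a} ha x hx => by
      rw [neg_mul, uU_neg, pj_inv]; exact K.inv_mem (ha x hx)
    inv_mem' := fun a ha => by
      by_cases h0 : a = 0
      · have h00 : a⁻¹ = a := by rw [h0, _root_.inv_zero]
        rw [h00]; exact ha
      have hpow : ∀ k : ℕ, ∀ x, pj (uU x : GL (Fin 2) F) ∈ K →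
          pj (uU (a ^ k * x) : GL (Fin 2) F) ∈ K := by
        intro k
        induction k with
        | zero => intro x hx; simpa using hx
        | succ k ih => intro x hx; rw [pow_succ, mul_assoc]; exact ih _ (ha x hx)
      have h1 : a⁻¹ = a ^ (Fintype.card F - 2) := by
        symm
        apply eq_inv_of_mul_eq_one_left
        have hq : 1 < Fintype.card F := Fintype.one_lt_card
        rw [← pow_succ, show Fintype.card F - 2 + 1 = Fintype.card F - 1 by omega]
        exact FiniteField.pow_card_sub_one_eq_one a h0
      rw [h1]
      exact hpow _ }

lemma unip_normal [Fintype F] (hs1 : IsSquare (-1 : F))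
    (hm : ∀ a b : F, ¬ IsSquare a → ¬ IsSquare b → IsSquare (a * b))
    (hgen : ∀ (S : Subfield F) (y : F), ¬ IsSquare y → y ∈ S → S = ⊤)
    {K : Subgroup (ProjectiveGL2 F)} {t k : ProjectiveGL2 F} (htK : t ∈ K) (htN : t ∉ NN F)
    (htt : t * t = 1) (hkK : k ∈ K) (hkN : k ∉ NN F) {v : F} (hv : v ≠ 0)
    (hvK : pj (uU v : GL (Fin 2) F) ∈ K)
    (hR : RR (pj (uU v)) (k * pj (uU v) * k⁻¹)) : K = ⊤ := by
  obtain ⟨B, rfl⟩ := pj_surj k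
  rw [mem_NN] at hkN
  have hc : B.val 1 0 = 0 := by
    rw [← pj_mul, ← pj_inv, ← pj_mul, RR_mk, gcomm] at hR
    have hX : (B * uU v * B⁻¹) * B = B * uU v := by group
    generalize B * uU v * B⁻¹ = X at hR hX
    have e1 := congrArg (fun X : GL (Fin 2) F => X.val 1 0) hX
    have e2 := congrArg (fun X : GL (Fin 2) F => X.val 1 1) hX
    simp [uU, hv] at hR e1 e2
    rw [hR.1] at e1 e2
    simp at e1 e2
    by_contra hc
    have h : X.val 1 1 = 1 := mul_right_cancel₀ hc (by rw [one_mul]; exact e1)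
    rw [h] at e2
    have : B.val 1 0 * v = 0 := by linear_combination -e2
    rcases mul_eq_zero.1 this with h | h
    · exact hc h
    · exact hv h
  have hdt : dt B = B.val 0 0 * B.val 1 1 := by rw [dt, hc]; ring
  have hd0 : B.val 1 1 ≠ 0 := by
    intro h; exact dt_ne B (by rw [hdt, h, mul_zero])
  set y := B.val 0 0 / B.val 1 1 with hy
  have hyns : ¬ IsSquare y := by
    intro h; apply hkN
    have : dt B = y * (B.val 1 1 * B.val 1 1) := by rw [hdt, hy]; field_simp
    rw [this]; exact h.mul (IsSquare.mul_self _)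
  have hyS : y ∈ multK K := by
    intro x hx
    have : uU (y * x) = B * uU x * B⁻¹ := by
      rw [eq_mul_inv_iff_mul_eq]
      apply gl_ext <;> simp [uU, hc, hy] <;> field_simp
      ring
    rw [this, pj_mul, pj_mul, pj_inv]
    exact K.mul_mem (K.mul_mem hkK hx) (K.inv_mem hkK)
  have htop := hgen _ y hyns hyS
  have hU : ∀ x, pj (uU x : GL (Fin 2) F) ∈ K := by
    intro x
    have h1 : x / v ∈ multK K := by rw [htop]; trivial
    have h2 := h1 v hvK
    rwa [div_mul_cancel₀ x hv] at h2
  obtain ⟨A, rfl, hA, hAd⟩ := NN_trace htN htt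
  have hAc : A.val 1 0 ≠ 0 := by
    intro h; apply hAd
    rw [dt, hA, h]
    have e := hs1.mul (IsSquare.mul_self (A.val 0 0))
    have e' : A.val 0 0 * -A.val 0 0 - A.val 0 1 * 0 = -1 * (A.val 0 0 * A.val 0 0) := by ring
    rw [e']; exact e
  set s := -A.val 0 0 / A.val 1 0 with hs
  set W := uU s * A * uU (-s) with hW
  have hWK : pj W ∈ K := by
    rw [hW, pj_mul, pj_mul]
    exact K.mul_mem (K.mul_mem (hU _) htK) (hU _)
  have hsc : s * A.val 1 0 = - A.val 0 0 := by rw [hs]; field_simp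
  have w00 : W.val 0 0 = 0 := by
    simp [hW, uU]; linear_combination hsc
  have w11 : W.val 1 1 = 0 := by
    simp [hW, uU, hA]; linear_combination -hsc
  have w10 : W.val 1 0 = A.val 1 0 := by
    simp [hW, uU]
  have w01 : W.val 0 1 ≠ 0 := by
    intro h
    exact dt_ne W (by rw [dt, w00, h]; ring)
  have hL : ∀ x, pj (uL x : GL (Fin 2) F) ∈ K := by
    intro x
    have : uL x = W * uU (x * W.val 0 1 / W.val 1 0) * W⁻¹ := by
      rw [eq_mul_inv_iff_mul_eq]
      have w10' : W.val 1 0 ≠ 0 := by rw [w10]; exact hAc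
      apply gl_ext <;> simp only [gmul00, gmul01, gmul10, gmul11, w00, w11] <;> simp [uU, uL]
      field_simp
    rw [this, pj_mul, pj_mul, pj_inv]
    exact K.mul_mem (K.mul_mem hWK (hU _)) (K.inv_mem hWK)
  exact gen_all hm hU hL htK hAd

lemma unip_conj (h2 : (2 : F) ≠ 0) {A : GL (Fin 2) F} (hA : pj A ≠ 1)
    (hd : (A.val 0 0 - A.val 1 1) ^ 2 + 4 * A.val 0 1 * A.val 1 0 = 0) :
    ∃ (P : GL (Fin 2) F) (v : F), v ≠ 0 ∧ pj P * pj A * (pj P)⁻¹ = pj (uU v) := by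
  rw [Ne, pj_eq_one] at hA
  have h4 : (4 : F) ≠ 0 := by
    have := mul_ne_zero h2 h2
    intro h; apply this; linear_combination h
  have hx : A.val 0 0 + A.val 1 1 ≠ 0 := by
    intro h
    apply gdet A
    apply mul_left_cancel₀ h4
    linear_combination -hd + (A.val 0 0 + A.val 1 1) * h
  have main : ∀ (Q : GL (Fin 2) F) (w : F), w ≠ 0 →
      (∃ s : F, s ≠ 0 ∧ (Q * uU w).val 0 0 = s * (A * Q).val 0 0 ∧
        (Q * uU w).val 0 1 = s * (A * Q).val 0 1 ∧ (Q * uU w).val 1 0 = s * (A * Q).val 1 0 ∧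
        (Q * uU w).val 1 1 = s * (A * Q).val 1 1) →
      ∃ (P : GL (Fin 2) F) (v : F), v ≠ 0 ∧ pj P * pj A * (pj P)⁻¹ = pj (uU v) := by
    intro Q w hw h
    refine ⟨Q⁻¹, w, hw, ?_⟩
    have h1 := pj_eq'.2 h
    rw [pj_mul, pj_mul] at h1
    rw [pj_inv, inv_inv, mul_assoc, h1]; group
  by_cases hb : A.val 0 1 = 0
  · have hc : A.val 1 0 ≠ 0 := by
      intro hc
      apply hA
      refine ⟨hb, hc, ?_⟩
      rw [hb] at hd
      have : A.val 0 0 - A.val 1 1 = 0 := by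
        apply pow_eq_zero_iff (two_ne_zero) |>.1
        linear_combination hd
      linear_combination this
    apply main (gl (A.val 0 0 - A.val 1 1) 1 (2 * A.val 1 0) 0 (by
      simpa using ⟨h2, hc⟩)) (1 / (A.val 0 0 + A.val 1 1)) (by simpa using hx)
    refine ⟨2 / (A.val 0 0 + A.val 1 1), div_ne_zero h2 hx, ?_⟩
    simp [uU]
    refine ⟨?_, ?_, ?_, ?_⟩ <;> field_simp
    · linear_combination -hd
    · ring
    · ring
  · apply main (gl (2 * A.val 0 1) 0 (-(A.val 0 0 - A.val 1 1)) 1 (by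
      simpa using ⟨h2, hb⟩)) (1 / (A.val 0 0 + A.val 1 1)) (by simpa using hx)
    refine ⟨2 / (A.val 0 0 + A.val 1 1), div_ne_zero h2 hx, ?_⟩
    simp [uU]
    refine ⟨?_, ?_, ?_, ?_⟩ <;> field_simp
    · ring
    · linear_combination -hd
    · ring

lemma RR_conj {g h : ProjectiveGL2 F} (k : ProjectiveGL2 F) (hR : RR g h) :
    RR (k * g * k⁻¹) (k * h * k⁻¹) := by
  obtain ⟨A, rfl⟩ := pj_surj g
  obtain ⟨B, rfl⟩ := pj_surj h
  obtain ⟨C, rfl⟩ := pj_surj k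
  rw [RR_mk] at hR
  have := RR_mk (A := C * A * C⁻¹) (B := C * B * C⁻¹)
  refine this.2 ?_
  rw [_root_.conj_mul, _root_.conj_mul, hR]

lemma NN_conj {g k : ProjectiveGL2 F} (h : g ∉ NN F) : k * g * k⁻¹ ∉ NN F := by
  obtain ⟨A, rfl⟩ := pj_surj g
  obtain ⟨C, rfl⟩ := pj_surj k
  rw [← pj_inv, ← pj_mul, ← pj_mul, mem_NN, dt_mul, dt_mul, dt_inv]
  rw [mem_NN] at h
  rwa [mul_comm (dt C), mul_assoc, mul_inv_cancel₀ (dt_ne C), mul_one]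

lemma RR_unip [Fintype F] (h2 : (2 : F) ≠ 0) {p : ℕ} [CharP F p] (hp : p.Prime) (hodd : Odd p)
    (hs1 : IsSquare (-1 : F))
    (hm : ∀ a b : F, ¬ IsSquare a → ¬ IsSquare b → IsSquare (a * b))
    (hgen : ∀ (S : Subfield F) (y : F), ¬ IsSquare y → y ∈ S → S = ⊤)
    {K : Subgroup (ProjectiveGL2 F)} {t k u : ProjectiveGL2 F} (htK : t ∈ K) (htN : t ∉ NN F)
    (htt : t * t = 1) (hkK : k ∈ K) (hkN : k ∉ NN F) (huK : u ∈ K) (hu : u ≠ 1) (hup : u ^ p = 1)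
    (hR : RR u (k * u * k⁻¹)) : K = ⊤ := by
  obtain ⟨A, rfl⟩ := pj_surj u
  obtain ⟨P, v, hv, hP⟩ := unip_conj h2 hu (disc_zero h2 hp hodd hu hup)
  generalize pj P = g at hP
  have hmem : ∀ x ∈ K, g * x * g⁻¹ ∈ K.map (MulAut.conj g).toMonoidHom := by
    intro x hx
    exact ⟨x, hx, rfl⟩
  have h1 : K.map (MulAut.conj g).toMonoidHom = ⊤ := by
    apply unip_normal hs1 hm hgen (hmem t htK) (NN_conj htN)
      (by rw [_root_.conj_mul, htt]; simp) (hmem k hkK) (NN_conj hkN) hv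
    · rw [← hP]; exact hmem _ huK
    · rw [← hP]
      convert RR_conj g hR using 1
      group
  rw [eq_top_iff]
  intro x _
  have h3 : g * x * g⁻¹ ∈ K.map (MulAut.conj g).toMonoidHom := by rw [h1]; trivial
  obtain ⟨w, hw, hwx⟩ := h3
  have : w = x := (MulAut.conj g).injective hwx
  rwa [← this]

/-- the structure for `PGL₂(F)` -/
noncomputable def geoPGL {p n : ℕ} (hp : p.Prime) (hodd : Odd p) (hn : 1 ≤ n) (F : Type) [Field F]
    [Fintype F] (hF : Fintype.card F = p ^ 2 ^ n) : Geo (ProjectiveGL2 F) p :=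
  haveI : CharP F p := ff_ringChar hp hF
  have h2 : (2 : F) ≠ 0 := ff_two hp hodd hF
  { R := RR
    N := NN F
    idx := NN_index (FiniteField.exists_nonsquare (ff_char_ne hp hodd hF))
      (fun _ _ => ff_mul_nonsq hp hodd hF)
    refl := fun g => by
      obtain ⟨A, rfl⟩ := pj_surj g
      rw [RR_mk]
    symm := fun {g h} hR A B hA hB => (hR B A hB hA).symm
    one := fun g => by
      obtain ⟨A, rfl⟩ := pj_surj g
      rw [← pj_one, RR_mk]; simp
    inv := fun {g h} hR => by
      obtain ⟨A, rfl⟩ := pj_surj g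
      obtain ⟨B, rfl⟩ := pj_surj h
      rw [RR_mk] at hR
      rw [← pj_inv, RR_mk]
      exact (Commute.inv_right hR).eq
    mul := fun {g h k} h1 h2 => by
      obtain ⟨A, rfl⟩ := pj_surj g
      obtain ⟨B, rfl⟩ := pj_surj h
      obtain ⟨C, rfl⟩ := pj_surj k
      rw [RR_mk] at h1 h2
      rw [← pj_mul, RR_mk]
      exact (Commute.mul_right h1 h2).eq
    conj := fun k h => RR_conj k h
    trans := fun h1 h2 h3 => RR_trans h1 h2 h3
    comm := fun {g h} hR => by
      obtain ⟨A, rfl⟩ := pj_surj g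
      obtain ⟨B, rfl⟩ := pj_surj h
      rw [RR_mk] at hR
      rw [← pj_mul, ← pj_mul, hR]
    of_comm := fun h => RR_of_comm h2 h
    anti := fun _ _ h3 h4 h5 h6 => RR_anti h3 h4 h5 h6
    uniq := fun h3 h4 h5 h6 h7 => RR_uniq h2 h3 h4 h5 h6 h7
    label := fun h => RR_label h2 hp hodd h
    order4 := fun h3 h4 => NN_order4 h2 (ff_sq_two hodd hn hF) h3 h4
    unip := fun h3 h4 h5 h6 h7 h8 h9 h10 h11 => RR_unip h2 hp hodd (ff_neg_one hodd hn hF)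
      (fun _ _ => ff_mul_nonsq hp hodd hF)
      (fun S _ ha hb => ff_gen hp hodd hF S ha hb) h3 h4 h5 h6 h7 h8 h9 h10 h11
    centr := fun h3 h4 => NN_centr (ff_neg_one hodd hn hF) h3 h4
    center := fun h => PGL_center h2 h }

end pglunip


open Classical in
lemma mobius_aux {G : Type} [Group G] [Fintype G] (μ : Subgroup G → Subgroup G → ℤ)
    (hμ_refl : ∀ x : Subgroup G, μ x x = 1)
    (hμ_sum : ∀ x y : Subgroup G, x < y →
      ∑ᶠ z ∈ {z : Subgroup G | x ≤ z ∧ z ≤ y}, μ x z = 0)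
    (key : ∀ ν : Subgroup G → ℤ, (∀ x, x ≠ ⊤ → ∑ y with x ≤ y, ν y = 0) → ν ⊥ = 0) :
    μ ⊥ ⊤ = 0 := by
  letI : LocallyFiniteOrder (Subgroup G) := Fintype.toLocallyFiniteOrder
  have hagree : ∀ x y : Subgroup G, x ≤ y → μ x y = IncidenceAlgebra.mu ℤ x y := by
    intro x y
    induction y using WellFoundedLT.induction with
    | ind y ih =>
    intro hxy
    rcases eq_or_lt_of_le hxy with rfl | hlt
    · rw [hμ_refl, IncidenceAlgebra.mu_self]
    · have h1 := hμ_sum x y hlt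
      have hset : {z : Subgroup G | x ≤ z ∧ z ≤ y} = ((Finset.Icc x y : Finset (Subgroup G)) :
          Set (Subgroup G)) := by
        ext z; simp
      rw [hset, finsum_mem_coe_finset] at h1
      have h2 := IncidenceAlgebra.sum_Icc_mu_right (𝕜 := ℤ) x y
      rw [if_neg hlt.ne] at h2
      have hy : y ∈ Finset.Icc x y := Finset.mem_Icc.2 ⟨hxy, le_rfl⟩
      rw [← Finset.add_sum_erase _ _ hy] at h1 h2
      have h3 : ∑ z ∈ (Finset.Icc x y).erase y, μ x z =
          ∑ z ∈ (Finset.Icc x y).erase y, IncidenceAlgebra.mu ℤ x z := by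
        apply Finset.sum_congr rfl
        intro z hz
        rw [Finset.mem_erase, Finset.mem_Icc] at hz
        exact ih z (lt_of_le_of_ne hz.2.2 hz.1) hz.2.1
      rw [h3] at h1
      linarith
  rw [hagree ⊥ ⊤ bot_le]
  apply key (fun y => IncidenceAlgebra.mu ℤ y ⊤)
  intro x hx
  have h2 := IncidenceAlgebra.sum_Icc_mu_left (𝕜 := ℤ) x (⊤ : Subgroup G)
  rw [if_neg hx] at h2
  rw [← h2]
  apply Finset.sum_congr _ (fun _ _ => rfl)
  ext y
  simp

/-- The Möbius function of the subgroup lattice of `PGL₂(p^(2^n))` (p odd, n ≥ 1),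
evaluated at (⊥, ⊤), equals 0. -/
theorem mobius_subgroup_lattice_PGL2_eq_zero (p n : ℕ) (hp : Nat.Prime p) (hodd : Odd p) (hn : 1 ≤ n)
    (F : Type) [Field F] [Fintype F] (hF : Fintype.card F = p ^ 2 ^ n)
    (μ : Subgroup (ProjectiveGL2 F) → Subgroup (ProjectiveGL2 F) → ℤ)
    (hμ_refl : ∀ x : Subgroup (ProjectiveGL2 F), μ x x = 1)
    (hμ_sum : ∀ x y : Subgroup (ProjectiveGL2 F), x < y →
      ∑ᶠ z ∈ {z : Subgroup (ProjectiveGL2 F) | x ≤ z ∧ z ≤ y}, μ x z = 0) :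
    μ ⊥ ⊤ = 0 := by
  classical
  have : Finite (Matrix.GeneralLinearGroup (Fin 2) F) := inferInstance
  have : Finite (ProjectiveGL2 F) := Quotient.finite _
  haveI : Fintype (ProjectiveGL2 F) := Fintype.ofFinite _
  exact mobius_aux μ hμ_refl hμ_sum (fun ν h => (geoPGL hp hodd hn F hF).mobius
    ((geoPGL hp hodd hn F hF).cls hp hodd) ν h)
end

section
/- Let p be an odd prime, n ≥ 1, q = p^(2^n), and G = PGL₂(F_q). If x ∈ G is an involution not lying in the image of SL₂(F_q) in G, then the centralizer C_G(x) is isomorphic to the dihedral group of order 2(q+1). -/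
open Matrix

theorem dihedral_of_gens {G : Type*} [Group G] (H : Subgroup G) (N : ℕ) [NeZero N] (ρ s : G)
    (hr : orderOf ρ = N) (hs : s ∉ Subgroup.zpowers ρ) (hss : s * s = 1)
    (hsr : s * ρ * s⁻¹ = ρ⁻¹) (hrH : ρ ∈ H) (hsH : s ∈ H)
    (hcov : ∀ h ∈ H, h ∈ Subgroup.zpowers ρ ∨ s * h ∈ Subgroup.zpowers ρ) :
    Nonempty (H ≃* DihedralGroup N) := by
  have key : ∀ m n : ℤ, ((m : ZMod N) = n) → ρ ^ m = ρ ^ n := by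
    intro m n h
    rw [zpow_eq_zpow_iff_modEq, hr]
    exact (ZMod.intCast_eq_intCast_iff _ _ _).1 h
  have key2 : ∀ m n : ℤ, ρ ^ m = ρ ^ n → ((m : ZMod N) = n) := by
    intro m n h
    rw [zpow_eq_zpow_iff_modEq, hr] at h
    exact (ZMod.intCast_eq_intCast_iff _ _ _).2 h
  have hcs : ∀ i : ZMod N, (((i.val : ℤ)) : ZMod N) = i := by
    intro i; simp
  have hconj : ∀ m : ℤ, s * ρ ^ m * s⁻¹ = ρ ^ (-m) := by
    intro m
    rw [← conj_zpow, hsr, _root_.inv_zpow, _root_.zpow_neg]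
  have hsinv : s⁻¹ = s := inv_eq_of_mul_eq_one_left hss
  have hcomm : ∀ m : ℤ, ρ ^ m * s = s * ρ ^ (-m) := by
    intro m
    rw [← hconj m, hsinv, ← mul_assoc, ← mul_assoc, hss, one_mul]
  let f : DihedralGroup N →* G :=
    { toFun := fun d => match d with
        | .r i => ρ ^ (i.val : ℤ)
        | .sr i => s * ρ ^ (i.val : ℤ)
      map_one' := by
        rw [DihedralGroup.one_def]
        simp
      map_mul' := by
        rintro (i | i) (j | j)
        · simp only [DihedralGroup.r_mul_r]
          rw [← _root_.zpow_add]
          apply key; push_cast; simp only [ZMod.natCast_val, ZMod.cast_id', id]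
        · simp only [DihedralGroup.r_mul_sr]
          rw [← mul_assoc, hcomm, mul_assoc, ← _root_.zpow_add]
          congr 1
          apply key; push_cast; simp only [ZMod.natCast_val, ZMod.cast_id', id]; ring
        · simp only [DihedralGroup.sr_mul_r]
          rw [mul_assoc, ← _root_.zpow_add]
          congr 1
          apply key; push_cast; simp only [ZMod.natCast_val, ZMod.cast_id', id]
        · simp only [DihedralGroup.sr_mul_sr]
          rw [mul_assoc, ← mul_assoc _ s, hcomm, mul_assoc s, ← mul_assoc s s, hss, one_mul,
            ← _root_.zpow_add]
          apply key; push_cast; simp only [ZMod.natCast_val, ZMod.cast_id', id]; ring }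
  have hinj : Function.Injective f := by
    rw [injective_iff_map_eq_one]
    rintro (i | i) h
    · have h1 : ρ ^ (i.val : ℤ) = ρ ^ (0 : ℤ) := by rw [zpow_zero]; exact h
      have := key2 _ _ h1
      rw [hcs] at this
      rw [this, DihedralGroup.one_def]; simp
    · have h1 : s * ρ ^ (i.val : ℤ) = 1 := h
      exact absurd (by rw [eq_inv_of_mul_eq_one_left h1]; exact inv_mem (zpow_mem (Subgroup.mem_zpowers _) _)) hs
  have hrange : f.range = H := by
    apply le_antisymm
    · rintro _ ⟨(i | i), rfl⟩
      · exact zpow_mem hrH _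
      · exact mul_mem hsH (zpow_mem hrH _)
    · intro h hh
      rcases hcov h hh with ⟨m, hm⟩ | ⟨m, hm⟩
      · refine ⟨.r (m : ZMod N), ?_⟩
        rw [← hm]
        exact key _ _ (hcs _)
      · refine ⟨.sr (m : ZMod N), ?_⟩
        have : h = s * ρ ^ m := by
          have hm' : ρ ^ m = s * h := hm
          rw [hm', ← mul_assoc, hss, one_mul]
        rw [this]
        change s * _ = _
        congr 1
        exact key _ _ (hcs _)
  exact ⟨((MonoidHom.ofInjective hinj).trans (MulEquiv.subgroupCongr hrange)).symm⟩

theorem mem_center_iff' {F : Type} [Field F] (g : GL (Fin 2) F) :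
    g ∈ Subgroup.center (GL (Fin 2) F) ↔ g 0 1 = 0 ∧ g 1 0 = 0 ∧ g 0 0 = g 1 1 := by
  rw [Matrix.GeneralLinearGroup.mem_center_iff_val_mem_range_scalar]
  constructor
  · rintro ⟨t, ht⟩
    have h := fun i j => congrFun (congrFun ht i) j
    simp only [← h]
    simp
  · rintro ⟨h1, h2, h3⟩
    refine ⟨g 0 0, ?_⟩
    ext i j
    fin_cases i <;> fin_cases j <;> simp [h1, h2, h3]

/-- structure of a representative -/
theorem rep_facts {F : Type} [Field F] (hsq : IsSquare (-1 : F))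
    (A : GL (Fin 2) F)
    (hx : orderOf (A : ProjectiveGL2 F) = 2) (hxS : (A : ProjectiveGL2 F) ∉ socleSL2 F) :
    A 1 1 = - A 0 0 ∧ ¬ IsSquare (A 0 0 * A 0 0 + A 0 1 * A 1 0) := by
  have hne : (A : ProjectiveGL2 F) ≠ 1 := by
    intro h; rw [h] at hx; simp at hx
  have hAc : A ∉ Subgroup.center (GL (Fin 2) F) := by
    intro h; exact hne ((QuotientGroup.eq_one_iff _).2 h)
  have hAA : A * A ∈ Subgroup.center (GL (Fin 2) F) := by
    rw [← QuotientGroup.eq_one_iff, ← sq, QuotientGroup.mk_pow]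
    exact orderOf_dvd_iff_pow_eq_one.1 hx.dvd
  rw [mem_center_iff'] at hAc hAA
  simp only [Units.val_mul, Matrix.mul_apply, Fin.sum_univ_two] at hAA
  obtain ⟨e1, e2, e3⟩ := hAA
  have htr : A 1 1 = - A 0 0 := by
    by_contra hcon
    have hs : A 0 0 + A 1 1 ≠ 0 := fun h => hcon (by linear_combination h)
    apply hAc
    refine ⟨?_, ?_, ?_⟩
    · apply (mul_eq_zero.1 (show (A 0 0 + A 1 1) * A 0 1 = 0 by linear_combination e1)).resolve_left hs
    · apply (mul_eq_zero.1 (show (A 0 0 + A 1 1) * A 1 0 = 0 by linear_combination e2)).resolve_left hs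
    · have := (mul_eq_zero.1 (show (A 0 0 + A 1 1) * (A 0 0 - A 1 1) = 0 by linear_combination e3)).resolve_left hs
      linear_combination this
  refine ⟨htr, ?_⟩
  intro hD
  have hdet : A.val.det = -1 * (A 0 0 * A 0 0 + A 0 1 * A 1 0) := by
    rw [Matrix.det_fin_two, htr]; ring
  obtain ⟨t, ht⟩ : IsSquare A.val.det := by rw [hdet]; exact hsq.mul hD
  have hdne : A.val.det ≠ 0 := by
    have := (Matrix.isUnit_iff_isUnit_det A.val).1 A.isUnit
    exact this.ne_zero
  have ht0 : t ≠ 0 := by rintro rfl; apply hdne; rw [ht]; ring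
  apply hxS
  have hdB : (t⁻¹ • A.val).det = 1 := by
    rw [Matrix.det_smul, ht]; simp; field_simp
  let S : Matrix.SpecialLinearGroup (Fin 2) F := ⟨t⁻¹ • A.val, hdB⟩
  refine ⟨S, ?_⟩
  change QuotientGroup.mk' _ (Matrix.SpecialLinearGroup.toGL S) = QuotientGroup.mk' _ A
  rw [QuotientGroup.mk'_eq_mk']
  refine ⟨Matrix.GeneralLinearGroup.scalar (Fin 2) (Units.mk0 t ht0), ?_, ?_⟩
  · rw [Matrix.GeneralLinearGroup.center_eq_range_scalar]; exact ⟨_, rfl⟩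
  · apply Units.ext
    change (t⁻¹ • A.val) * (Matrix.scalar (Fin 2) t) = A.val
    ext i j
    simp
    field_simp

theorem comm_of_pgl {F : Type} [Field F] (g A : GL (Fin 2) F)
    (h : (g : ProjectiveGL2 F) * A = A * g) :
    g.val * A.val = A.val * g.val ∨ g.val * A.val = - (A.val * g.val) := by
  rw [← QuotientGroup.mk_mul, ← QuotientGroup.mk_mul, QuotientGroup.eq,
    Matrix.GeneralLinearGroup.mem_center_iff_val_mem_range_scalar] at h
  obtain ⟨t, ht⟩ := h
  have h1 : A.val * g.val = t • (g.val * A.val) := by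
    have : (g * A) * ((g * A)⁻¹ * (A * g)) = A * g := by group
    have h2 := congrArg Units.val this
    rw [Units.val_mul, ← ht] at h2
    rw [Units.val_mul, Units.val_mul] at h2
    rw [← h2]
    ext i j
    simp [mul_comm]
  have hdA : A.val.det ≠ 0 := ((Matrix.isUnit_iff_isUnit_det A.val).1 A.isUnit).ne_zero
  have hdg : g.val.det ≠ 0 := ((Matrix.isUnit_iff_isUnit_det g.val).1 g.isUnit).ne_zero
  have h3 := congrArg Matrix.det h1
  rw [Matrix.det_smul, Matrix.det_mul, Matrix.det_mul, Fintype.card_fin] at h3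
  have h4 : t ^ 2 = 1 := by
    apply mul_right_cancel₀ (mul_ne_zero hdA hdg)
    linear_combination -h3
  rcases sq_eq_one_iff.1 h4 with h5 | h5
  · left; rw [h1, h5, one_smul]
  · right; rw [h1, h5]; simp

theorem centralizer_of_rep {F : Type} [Field F] [Fintype F] (h2 : (2 : F) ≠ 0)
    (A : GL (Fin 2) F) (htr : A 1 1 = - A 0 0)
    (hD : ¬ IsSquare (A 0 0 * A 0 0 + A 0 1 * A 1 0)) :
    Nonempty (Subgroup.centralizer {(A : ProjectiveGL2 F)} ≃*
      DihedralGroup (Fintype.card F + 1)) := by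
  classical
  obtain ⟨a, ha⟩ : ∃ a, a = A 0 0 := ⟨_, rfl⟩
  obtain ⟨b, hb⟩ : ∃ b, b = A 0 1 := ⟨_, rfl⟩
  obtain ⟨c, hc⟩ : ∃ c, c = A 1 0 := ⟨_, rfl⟩
  rw [← ha] at htr
  rw [← ha, ← hb, ← hc] at hD
  have hAv : A.val = !![a, b; c, -a] := by
    ext i j
    fin_cases i <;> fin_cases j <;> simp [ha, hb, hc, htr]
  clear ha hb hc htr
  have hc0 : c ≠ 0 := by
    rintro rfl; apply hD; exact ⟨a, by ring⟩
  obtain ⟨D, hDd⟩ : ∃ D, D = a * a + b * c := ⟨_, rfl⟩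
  rw [← hDd] at hD
  have : Fact (∀ r : F, r ^ 2 ≠ D + 0 * r) :=
    ⟨fun r hr => hD ⟨r, by linear_combination -hr⟩⟩
  let K := QuadraticAlgebra F D 0
  have : Fintype K := Fintype.ofEquiv (F × F) (QuadraticAlgebra.equivProd D 0).symm
  let L : K →ₐ[F] Matrix (Fin 2) (Fin 2) F := QuadraticAlgebra.lift ⟨A.val, by
    rw [hAv, hDd]
    ext i j
    fin_cases i <;> fin_cases j <;> simp [Matrix.mul_apply, Fin.sum_univ_two] <;> ring⟩
  have hL : ∀ k : K, L k = !![k.re + k.im * a, k.im * b; k.im * c, k.re - k.im * a] := by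
    intro k
    change k.re • (1 : Matrix (Fin 2) (Fin 2) F) + k.im • A.val = _
    rw [hAv]
    ext i j
    fin_cases i <;> fin_cases j <;> simp <;> ring
  let ψ : Kˣ →* GL (Fin 2) F := Units.map (L : K →* Matrix (Fin 2) (Fin 2) F)
  have hψ : ∀ k : Kˣ, (ψ k).val = L k := fun k => rfl
  let φ : Kˣ →* ProjectiveGL2 F := (QuotientGroup.mk' _).comp ψ
  have hφ : ∀ k : Kˣ, φ k = ((ψ k : GL (Fin 2) F) : ProjectiveGL2 F) := fun k => rfl
  -- kernel
  have hker : φ.ker = (Units.map (algebraMap F K : F →* K)).range := by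
    ext k
    rw [MonoidHom.mem_ker, hφ, QuotientGroup.eq_one_iff, mem_center_iff', MonoidHom.mem_range]
    rw [hψ, hL]
    constructor
    · rintro ⟨-, h, -⟩
      have him : k.val.im = 0 := by simpa [hc0] using h
      have hre : k.val.re ≠ 0 := by
        intro hre
        exact k.ne_zero (QuadraticAlgebra.ext hre him)
      refine ⟨Units.mk0 _ hre, ?_⟩
      apply Units.ext
      exact QuadraticAlgebra.ext rfl him.symm
    · rintro ⟨u, rfl⟩
      have : ((Units.map (algebraMap F K : F →* K) u).val).im = 0 := rfl
      rw [this]; simp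
  have hcardker : Nat.card φ.ker = Fintype.card F - 1 := by
    rw [hker, ← Nat.card_congr (MonoidHom.ofInjective (Units.map_injective
      (f := (algebraMap F K : F →* K)) (algebraMap F K).injective)).toEquiv]
    rw [Nat.card_eq_fintype_card, Fintype.card_units]
  have hcardK : Nat.card Kˣ = Fintype.card F * Fintype.card F - 1 := by
    rw [Nat.card_eq_fintype_card, Fintype.card_units,
      Fintype.card_congr (QuadraticAlgebra.equivProd D (0 : F)), Fintype.card_prod]
  have hq : 1 < Fintype.card F := Fintype.one_lt_card
  have hcardrange : Nat.card φ.range = Fintype.card F + 1 := by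
    have h := Subgroup.card_mul_index φ.ker
    rw [Subgroup.index_ker, hcardker, hcardK] at h
    obtain ⟨m, hm⟩ : ∃ m, Fintype.card F = m + 2 := ⟨Fintype.card F - 2, by omega⟩
    rw [hm] at h ⊢
    have h' : (m + 1) * Nat.card φ.range = (m + 1) * (m + 2 + 1) := by
      rw [show m + 2 - 1 = m + 1 by omega] at h
      rw [h, show (m + 2) * (m + 2) = (m + 1) * (m + 2 + 1) + 1 by ring]; simp
    exact Nat.eq_of_mul_eq_mul_left (by omega) h'
  obtain ⟨k, hk⟩ := IsCyclic.exists_generator (α := Kˣ)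
  have hrange : φ.range = Subgroup.zpowers (φ k) := by
    rw [← MonoidHom.map_zpowers, MonoidHom.range_eq_map]
    congr 1
    exact ((Subgroup.eq_top_iff' _).2 hk).symm
  have hord : orderOf (φ k) = Fintype.card F + 1 := by
    rw [← Nat.card_zpowers, ← hrange, hcardrange]
  -- commuting elements
  have hcommA : ∀ k : Kˣ, ψ k * A = A * ψ k := by
    intro k
    apply Units.ext
    rw [Units.val_mul, Units.val_mul, hψ, hL, hAv]
    ext i j
    fin_cases i <;> fin_cases j <;> simp [Matrix.mul_apply, Fin.sum_univ_two] <;> ring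
  have hcomm : ∀ g : GL (Fin 2) F, g.val * A.val = A.val * g.val →
      (g : ProjectiveGL2 F) ∈ φ.range := by
    intro g hg
    rw [hAv] at hg
    have e1 := congrFun (congrFun hg 0) 0
    have e2 := congrFun (congrFun hg 1) 0
    simp [Matrix.mul_apply, Fin.sum_univ_two] at e1 e2
    let z : K := ⟨g 0 0 - g 1 0 / c * a, g 1 0 / c⟩
    have hz : L z = g.val := by
      rw [hL]
      ext i j
      fin_cases i <;> fin_cases j <;> simp [z] <;> field_simp
      · linear_combination -e1
      · linear_combination -e2
    have hz0 : z ≠ 0 := by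
      intro h
      rw [h, map_zero] at hz
      exact g.ne_zero hz.symm
    refine ⟨Units.mk0 z hz0, ?_⟩
    rw [hφ]
    congr 1
    exact Units.ext hz
  let s : GL (Fin 2) F := Matrix.GeneralLinearGroup.mkOfDetNeZero !![c, -2 * a; 0, -c]
    (by simp [Matrix.det_fin_two, hc0])
  have hs : s.val = !![c, -2 * a; 0, -c] := rfl
  have hsA : s.val * A.val = - (A.val * s.val) := by
    rw [hs, hAv]
    ext i j
    fin_cases i <;> fin_cases j <;> simp [Matrix.mul_apply, Fin.sum_univ_two] <;> ring
  have hss : (s : ProjectiveGL2 F) * s = 1 := by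
    rw [← QuotientGroup.mk_mul, QuotientGroup.eq_one_iff, mem_center_iff', Units.val_mul, hs]
    simp [Matrix.mul_apply, Fin.sum_univ_two]; ring
  rw [hrange] at hcomm
  apply dihedral_of_gens _ _ (φ k) (s : ProjectiveGL2 F) hord
  · rw [← hrange]
    rintro ⟨k', hk'⟩
    rw [hφ, ← QuotientGroup.mk'_apply, ← QuotientGroup.mk'_apply,
      QuotientGroup.mk'_eq_mk'] at hk'
    obtain ⟨z, hz, hzs⟩ := hk'
    have hzA := Subgroup.mem_center_iff.1 hz A
    have h1 : s * A = A * s := by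
      rw [← hzs, mul_assoc, ← hzA, ← mul_assoc, hcommA, mul_assoc]
    have h3 : s.val * A.val = A.val * s.val := congrArg Units.val h1
    rw [hs, hAv] at h3
    have e := congrFun (congrFun h3 1) 0
    simp [Matrix.mul_apply, Fin.sum_univ_two] at e
    have : 2 * (c * c) = 0 := by linear_combination -e
    exact mul_ne_zero h2 (mul_ne_zero hc0 hc0) this
  · exact hss
  · have h1 : ((s : ProjectiveGL2 F) * φ k) * ((s : ProjectiveGL2 F) * φ k) = 1 := by
      rw [hφ, ← QuotientGroup.mk_mul, ← QuotientGroup.mk_mul, QuotientGroup.eq_one_iff,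
        mem_center_iff', Units.val_mul, Units.val_mul, hs, hψ, hL]
      simp [Matrix.mul_apply, Fin.sum_univ_two]
      refine ⟨?_, ?_, ?_⟩ <;> ring
    rw [inv_eq_of_mul_eq_one_left hss]
    apply eq_inv_of_mul_eq_one_left
    rw [← h1]; simp only [mul_assoc]
  · rw [Subgroup.mem_centralizer_singleton_iff, hφ, ← QuotientGroup.mk_mul, hcommA,
      QuotientGroup.mk_mul]
  · rw [Subgroup.mem_centralizer_singleton_iff, ← QuotientGroup.mk_mul, ← QuotientGroup.mk_mul,
      ← QuotientGroup.mk'_apply, ← QuotientGroup.mk'_apply, QuotientGroup.mk'_eq_mk']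
    refine ⟨-1, ?_, ?_⟩
    · rw [mem_center_iff']; simp
    · apply Units.ext
      simp [hsA]
  · intro h
    induction h using QuotientGroup.induction_on with | H g => ?_
    intro hg
    rw [Subgroup.mem_centralizer_singleton_iff] at hg
    rcases comm_of_pgl g A hg with h | h
    · left; exact hcomm g h
    · right
      rw [← QuotientGroup.mk_mul]
      apply hcomm
      rw [Units.val_mul, Matrix.mul_assoc, h, Matrix.mul_neg, ← Matrix.mul_assoc, hsA,
        Matrix.neg_mul, neg_neg, Matrix.mul_assoc]

/-- The centralizer of an outer involution of `PGL₂(q)`, `q = p^(2^n)`, is dihedral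
of order `2(q+1)`. -/
theorem centralizer_outer_involution_isDihedral (p n : ℕ) (hp : Nat.Prime p) (hodd : Odd p) (hn : 1 ≤ n)
    (F : Type) [Field F] [Fintype F] (hF : Fintype.card F = p ^ 2 ^ n)
    (x : ProjectiveGL2 F) (hx : orderOf x = 2) (hxS : x ∉ socleSL2 F) :
    Nonempty (Subgroup.centralizer {x} ≃* DihedralGroup (p ^ 2 ^ n + 1)) := by
  have h2 : (2 : F) ≠ 0 := by
    apply Ring.two_ne_zero
    intro h
    have h1 := FiniteField.even_card_of_char_two h
    have h3 : Odd (Fintype.card F) := by rw [hF]; exact hodd.pow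
    rw [Nat.odd_iff] at h3
    omega
  have hsq : IsSquare (-1 : F) := by
    rw [FiniteField.isSquare_neg_one_iff, hF]
    obtain ⟨m, rfl⟩ : ∃ m, n = m + 1 := ⟨n - 1, by omega⟩
    rw [pow_succ, pow_mul, sq, Nat.mul_mod]
    have h4 : p ^ 2 ^ m % 4 < 4 := Nat.mod_lt _ (by norm_num)
    generalize p ^ 2 ^ m % 4 = r at h4
    interval_cases r <;> decide
  rw [← hF]
  induction x using QuotientGroup.induction_on with | H A => ?_
  obtain ⟨h3, h4⟩ := rep_facts hsq A hx hxS
  exact centralizer_of_rep h2 A h3 h4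
end

section
/- Let p be an odd prime, n ≥ 1, q = p^(2^n), and G = PGL₂(F_q). If H and K are distinct subgroups of G, each isomorphic to the dihedral group of order 2(q−1) or to the dihedral group of order 2(q+1), then the intersection H ∩ K is either trivial, or cyclic of order 2, or a Klein four-group. -/
open Matrix

/-- A matrix commuting with a non-scalar `A` is a linear combination of `1` and `A`. -/
lemma comm_lin {F : Type} [Field F] (A B : Matrix (Fin 2) (Fin 2) F)
    (hA : ¬ ∃ x : F, A = Matrix.scalar (Fin 2) x) (h : A * B = B * A) :
    ∃ x y : F, B = Matrix.scalar (Fin 2) x + y • A := by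
  have e00 := congrFun (congrFun h 0) 0
  have e01 := congrFun (congrFun h 0) 1
  have e10 := congrFun (congrFun h 1) 0
  simp only [Matrix.mul_apply, Fin.sum_univ_two] at e00 e01 e10
  by_cases hb : A 0 1 = 0
  · by_cases hc : A 1 0 = 0
    · by_cases hd : A 0 0 - A 1 1 = 0
      · exfalso
        apply hA
        refine ⟨A 0 0, ?_⟩
        ext i j
        fin_cases i <;> fin_cases j <;> simp [hb, hc]
        linear_combination - hd
      · refine ⟨B 0 0 - (B 0 0 - B 1 1) / (A 0 0 - A 1 1) * A 0 0,
          (B 0 0 - B 1 1) / (A 0 0 - A 1 1), ?_⟩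
        ext i j
        fin_cases i <;> fin_cases j <;> simp [hb, hc]
        · apply mul_left_cancel₀ hd
          rw [hb] at e01
          linear_combination e01
        · apply mul_left_cancel₀ hd
          rw [hc] at e10
          linear_combination - e10
        · field_simp
          ring
    · refine ⟨B 0 0 - B 1 0 / A 1 0 * A 0 0, B 1 0 / A 1 0, ?_⟩
      ext i j
      fin_cases i <;> fin_cases j <;> simp
      · field_simp
        linear_combination - e00
      · field_simp
      · field_simp
        linear_combination - e10
  · refine ⟨B 0 0 - B 0 1 / A 0 1 * A 0 0, B 0 1 / A 0 1, ?_⟩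
    ext i j
    fin_cases i <;> fin_cases j <;> simp
    · field_simp
    · field_simp
      linear_combination e00
    · field_simp
      linear_combination e01

lemma scalar_mk {F : Type} [Field F] (A : GL (Fin 2) F) (x : F)
    (h : (A : Matrix (Fin 2) (Fin 2) F) = Matrix.scalar (Fin 2) x) :
    ((A : GL (Fin 2) F) : ProjectiveGL2 F) = 1 := by
  rw [QuotientGroup.eq_one_iff, Matrix.GeneralLinearGroup.mem_center_iff_val_mem_range_scalar]
  exact ⟨x, h.symm⟩

/-- Lifts of commuting elements genuinely commute when `g ^ 2 ≠ 1`. -/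
lemma lifts_comm {F : Type} [Field F] (h2 : (2 : F) ≠ 0) (A B : GL (Fin 2) F)
    (hA : ((A : ProjectiveGL2 F)) ^ 2 ≠ 1)
    (h : (A : ProjectiveGL2 F) * (B : ProjectiveGL2 F) = B * A) :
    (A : Matrix (Fin 2) (Fin 2) F) * B = B * A := by
  rw [← QuotientGroup.mk_mul, ← QuotientGroup.mk_mul, QuotientGroup.eq,
    Matrix.GeneralLinearGroup.mem_center_iff_val_mem_range_scalar] at h
  obtain ⟨l, hl⟩ := h
  have h1 : (B : Matrix (Fin 2) (Fin 2) F) * A = l • ((A : Matrix (Fin 2) (Fin 2) F) * B) := by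
    have : (B * A : GL (Fin 2) F) = (A * B) * ((A * B)⁻¹ * (B * A)) := by group
    have h3 := congrArg (fun X : GL (Fin 2) F => (X : Matrix (Fin 2) (Fin 2) F)) this
    simp only [Units.val_mul (A * B) ((A * B)⁻¹ * (B * A))] at h3
    rw [← hl] at h3
    simp only [Units.val_mul] at h3
    rw [h3]
    ext i j
    simp [Matrix.scalar_apply, Matrix.mul_diagonal, mul_comm]
  have hdA : (A : Matrix (Fin 2) (Fin 2) F).det ≠ 0 :=
    ((Matrix.isUnit_iff_isUnit_det _).1 A.isUnit).ne_zero
  have hdB : (B : Matrix (Fin 2) (Fin 2) F).det ≠ 0 :=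
    ((Matrix.isUnit_iff_isUnit_det _).1 B.isUnit).ne_zero
  have hdet := congrArg Matrix.det h1
  rw [Matrix.det_smul, Matrix.det_mul, Matrix.det_mul] at hdet
  simp only [Fintype.card_fin] at hdet
  have hl2 : l ^ 2 = 1 := by
    apply mul_right_cancel₀ (mul_ne_zero hdA hdB)
    linear_combination - hdet
  rcases eq_or_eq_neg_of_sq_eq_sq l 1 (by rw [hl2, one_pow]) with rfl | rfl
  · rw [h1, one_smul]
  · exfalso
    apply hA
    have ht : (A : Matrix (Fin 2) (Fin 2) F).trace = 0 := by
      have h4 : (A : Matrix (Fin 2) (Fin 2) F)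
          = - ((B : Matrix (Fin 2) (Fin 2) F) * A * (B⁻¹ : GL (Fin 2) F)) := by
        rw [h1]
        simp [Matrix.mul_assoc]
      have h5 := congrArg Matrix.trace h4
      rw [Matrix.trace_neg, Matrix.trace_mul_cycle] at h5
      simp at h5
      have : (2 : F) * (A : Matrix (Fin 2) (Fin 2) F).trace = 0 := by linear_combination h5
      exact (mul_eq_zero.1 this).resolve_left h2
    rw [← QuotientGroup.mk_pow]
    apply scalar_mk _ (-(A : Matrix (Fin 2) (Fin 2) F).det)
    rw [Matrix.trace_fin_two] at ht
    ext i j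
    fin_cases i <;> fin_cases j <;>
      simp [pow_two, Matrix.mul_apply, Fin.sum_univ_two, Matrix.det_fin_two]
    · linear_combination (A 0 0) * ht
    · linear_combination (A 0 1) * ht
    · linear_combination (A 1 0) * ht
    · linear_combination (A 1 1) * ht

open Classical in
/-- Parametrization of the centralizer. -/
noncomputable def centParam {F : Type} [Field F] (A : Matrix (Fin 2) (Fin 2) F) :
    Option F → ProjectiveGL2 F
  | none => 1
  | some x => if h : IsUnit (A + Matrix.scalar (Fin 2) x) then
      ((h.unit : GL (Fin 2) F) : ProjectiveGL2 F) else 1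

lemma cent_card {F : Type} [Field F] [Fintype F] (h2 : (2 : F) ≠ 0) (g : ProjectiveGL2 F)
    (hg : g ^ 2 ≠ 1) : Nat.card (Subgroup.centralizer {g}) ≤ Fintype.card F + 1 := by
  obtain ⟨A, rfl⟩ := QuotientGroup.mk_surjective g
  have hsub : ((Subgroup.centralizer {(A : ProjectiveGL2 F)} : Subgroup _) : Set (ProjectiveGL2 F))
      ⊆ Set.range (centParam (A : Matrix (Fin 2) (Fin 2) F)) := by
    intro b hb
    obtain ⟨B, rfl⟩ := QuotientGroup.mk_surjective b
    rw [SetLike.mem_coe, Subgroup.mem_centralizer_singleton_iff] at hb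
    have hc := lifts_comm h2 A B hg (by first | exact hb | exact hb.symm)
    obtain ⟨x, y, hxy⟩ := comm_lin _ _ (by
      rintro ⟨x, hx⟩
      apply hg
      have := scalar_mk A x hx
      rw [this, one_pow]) hc
    by_cases hy : y = 0
    · refine ⟨none, ?_⟩
      rw [hy, zero_smul, add_zero] at hxy
      rw [scalar_mk B x hxy]
      rfl
    · refine ⟨some (y⁻¹ * x), ?_⟩
      have e : (A : Matrix (Fin 2) (Fin 2) F) + Matrix.scalar (Fin 2) (y⁻¹ * x)
          = y⁻¹ • (B : Matrix (Fin 2) (Fin 2) F) := by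
        rw [hxy]
        ext i j
        fin_cases i <;> fin_cases j <;> simp <;> field_simp <;> ring
      have hu : IsUnit ((A : Matrix (Fin 2) (Fin 2) F) + Matrix.scalar (Fin 2) (y⁻¹ * x)) := by
        rw [e]
        exact (IsUnit.smul (Units.mk0 y⁻¹ (inv_ne_zero hy)) B.isUnit)
      simp only [centParam, dif_pos hu]
      rw [QuotientGroup.eq, Matrix.GeneralLinearGroup.mem_center_iff_val_mem_range_scalar]
      refine ⟨y, ?_⟩
      have hB : (B : Matrix (Fin 2) (Fin 2) F) = (hu.unit : GL (Fin 2) F) * Matrix.scalar (Fin 2) y := by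
        rw [IsUnit.unit_spec, e]
        ext i j
        simp [Matrix.scalar_apply, Matrix.mul_diagonal]
        field_simp
      rw [Units.val_mul, hB, ← Matrix.mul_assoc, ← Units.val_mul]
      simp
  have := Set.ncard_le_ncard hsub (Set.finite_range _)
  calc _ = _ := Nat.card_coe_set_eq _
    _ ≤ _ := this
    _ ≤ _ := by
      rw [← Set.image_univ]
      refine (Set.ncard_image_le Set.finite_univ).trans ?_
      simp [Set.ncard_univ]

/-- The structure of a large dihedral subgroup around an element of order greater than two. -/
lemma dihedral_struct {F : Type} [Field F] [Fintype F] (h2 : (2 : F) ≠ 0) (m : ℕ) (hm : 0 < m)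
    (hlt : Fintype.card F + 1 < 2 * m) (H : Subgroup (ProjectiveGL2 F))
    (e : H ≃* DihedralGroup m) (g : ProjectiveGL2 F) (hgH : g ∈ H) (hg : g ^ 2 ≠ 1) :
    Subgroup.centralizer {g} ≤ H ∧ (∃ t ∈ H, t * g * t⁻¹ = g⁻¹) ∧
      ∀ h ∈ H, h ∈ Subgroup.centralizer {g} ∨ h * g * h⁻¹ = g⁻¹ := by
  have back : ∀ a b : H, e a = e b → (a : ProjectiveGL2 F) = b := fun a b h => by
    rw [e.injective h]
  obtain ⟨k, hk⟩ : ∃ k, e ⟨g, hgH⟩ = DihedralGroup.r k := by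
    rcases hh : e ⟨g, hgH⟩ with k | k
    · exact ⟨k, rfl⟩
    · exfalso
      apply hg
      have := back (⟨g, hgH⟩ ^ 2) 1 (by rw [map_pow, hh, map_one, pow_two]; simp)
      simpa using this
  refine ⟨?_, ?_, ?_⟩
  · set ρ : H := e.symm (DihedralGroup.r 1) with hρ
    have hord : orderOf (ρ : ProjectiveGL2 F) = m := by
      rw [Subgroup.orderOf_coe, hρ, MulEquiv.orderOf_eq, DihedralGroup.orderOf_r_one]
    have hle : Subgroup.zpowers (ρ : ProjectiveGL2 F) ≤ Subgroup.centralizer {g} := by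
      rw [Subgroup.zpowers_le, Subgroup.mem_centralizer_singleton_iff]
      have := back (ρ * ⟨g, hgH⟩) (⟨g, hgH⟩ * ρ) (by
        rw [map_mul, map_mul, hk, hρ, MulEquiv.apply_symm_apply]
        simp [add_comm])
      first
        | exact this
        | exact this.symm
    have hfin : Finite (Subgroup.centralizer {g}) := inferInstance
    have hdvd := Subgroup.card_dvd_of_le hle
    have hle2 := cent_card h2 g hg
    have hpos : 0 < Nat.card (Subgroup.centralizer {g}) := Nat.card_pos
    rw [Nat.card_zpowers, hord] at hdvd
    have hcard : Nat.card (Subgroup.centralizer {g}) = m := by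
      obtain ⟨c, hc⟩ := hdvd
      have : c < 2 := by
        by_contra hcon
        have := Nat.mul_le_mul_left m (not_lt.1 hcon)
        omega
      interval_cases c <;> omega
    have heq := Subgroup.eq_of_le_of_card_ge hle (by rw [Nat.card_zpowers, hord, hcard])
    rw [← heq, Subgroup.zpowers_le]
    exact ρ.2
  · refine ⟨(e.symm (DihedralGroup.sr 0) : H), Subtype.property _, ?_⟩
    have := back (e.symm (DihedralGroup.sr 0) * ⟨g, hgH⟩ * (e.symm (DihedralGroup.sr 0))⁻¹)
      (⟨g, hgH⟩⁻¹) (by simp [hk])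
    simpa using this
  · intro h hh
    rcases hj : e ⟨h, hh⟩ with j | j
    · left
      rw [Subgroup.mem_centralizer_singleton_iff]
      have := back (⟨h, hh⟩ * ⟨g, hgH⟩) (⟨g, hgH⟩ * ⟨h, hh⟩) (by
        rw [map_mul, map_mul, hk, hj]
        simp [add_comm])
      first
        | exact this
        | exact this.symm
    · right
      have := back (⟨h, hh⟩ * ⟨g, hgH⟩ * (⟨h, hh⟩)⁻¹)
        (⟨g, hgH⟩⁻¹) (by rw [map_mul, map_mul, map_inv, map_inv, hk, hj]; simp)
      simpa using this

lemma le_of_common {G : Type} [Group G] (g : G) (H K : Subgroup G)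
    (hK1 : Subgroup.centralizer {g} ≤ K) (hK2 : ∃ t ∈ K, t * g * t⁻¹ = g⁻¹)
    (hH : ∀ h ∈ H, h ∈ Subgroup.centralizer {g} ∨ h * g * h⁻¹ = g⁻¹) : H ≤ K := by
  intro h hh
  rcases hH h hh with h1 | h1
  · exact hK1 h1
  · obtain ⟨t, ht, ht2⟩ := hK2
    have : t⁻¹ * h ∈ Subgroup.centralizer {g} := by
      have h3 : h * g = t * g * t⁻¹ * h := by rw [ht2, ← h1]; group
      have h4 : (t⁻¹ * h) * g = g * (t⁻¹ * h) := by
        rw [mul_assoc, h3]; group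
      rw [Subgroup.mem_centralizer_singleton_iff]
      first
        | exact h4
        | exact h4.symm
    have h5 := K.mul_mem ht (hK1 this)
    simpa using h5

lemma card_le_four {L : Type} [Group L] (m : ℕ) [NeZero m] (φ : L →* DihedralGroup m)
    (hφ : Function.Injective φ) (hL : ∀ x : L, x ^ 2 = 1) : Nat.card L ≤ 4 := by
  classical
  let T : Finset (ZMod m) := Finset.univ.filter (fun i => 2 • i = 0)
  have hT : T.card ≤ 2 := IsAddCyclic.card_nsmul_eq_zero_le (α := ZMod m) (n := 2) (by norm_num)
  obtain ⟨j0, hj0⟩ : ∃ j0 : ZMod m, ∀ x j, φ x = DihedralGroup.sr j → j - j0 ∈ T := by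
    by_cases hex : ∃ x j, φ x = DihedralGroup.sr j
    · obtain ⟨x0, j0, h0⟩ := hex
      refine ⟨j0, fun x j hx => ?_⟩
      have := congrArg φ (hL (x0 * x))
      rw [map_pow, map_mul, h0, hx, map_one, pow_two, DihedralGroup.sr_mul_sr,
        DihedralGroup.r_mul_r, DihedralGroup.one_def] at this
      simp only [T, Finset.mem_filter, Finset.mem_univ, true_and, two_nsmul]
      exact DihedralGroup.r.inj this
    · exact ⟨0, fun x j hx => (hex ⟨x, j, hx⟩).elim⟩
  let S : Finset (DihedralGroup m) :=
    T.image DihedralGroup.r ∪ T.image (fun i => DihedralGroup.sr (i + j0))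
  have hS : S.card ≤ 4 := by
    refine (Finset.card_union_le _ _).trans ?_
    have h1 := Finset.card_image_le (s := T) (f := DihedralGroup.r)
    have h2 := Finset.card_image_le (s := T) (f := fun i => DihedralGroup.sr (i + j0))
    omega
  have hmem : ∀ x, φ x ∈ S := by
    intro x
    rcases hx : φ x with j | j
    · apply Finset.mem_union_left
      apply Finset.mem_image_of_mem
      have := congrArg φ (hL x)
      rw [map_pow, hx, map_one, pow_two,
        DihedralGroup.r_mul_r, DihedralGroup.one_def] at this
      simp only [T, Finset.mem_filter, Finset.mem_univ, true_and, two_nsmul]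
      exact DihedralGroup.r.inj this
    · apply Finset.mem_union_right
      exact Finset.mem_image.2 ⟨j - j0, hj0 x j hx, by simp⟩
  have := Nat.card_le_card_of_injective (fun x => (⟨φ x, hmem x⟩ : S))
    (fun a b h => hφ (congrArg Subtype.val h))
  rw [Nat.card_eq_fintype_card (α := S), Fintype.card_coe] at this
  · exact this.trans hS

/-- Two distinct maximal-type dihedral subgroups of `PGL₂(q)` intersect in the trivial
group, a cyclic group of order 2, or a Klein four-group. -/
theorem dihedral_inter_dihedral (p n : ℕ) (hp : Nat.Prime p) (hodd : Odd p) (hn : 1 ≤ n)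
    (F : Type) [Field F] [Fintype F] (hF : Fintype.card F = p ^ 2 ^ n)
    (H K : Subgroup (ProjectiveGL2 F))
    (hH : Nonempty (H ≃* DihedralGroup (p ^ 2 ^ n - 1)) ∨
      Nonempty (H ≃* DihedralGroup (p ^ 2 ^ n + 1)))
    (hK : Nonempty (K ≃* DihedralGroup (p ^ 2 ^ n - 1)) ∨
      Nonempty (K ≃* DihedralGroup (p ^ 2 ^ n + 1)))
    (hne : H ≠ K) :
    H ⊓ K = ⊥ ∨ (IsCyclic ↥(H ⊓ K) ∧ Nat.card ↥(H ⊓ K) = 2) ∨ IsKleinFour ↥(H ⊓ K) := by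
  have hq : 9 ≤ p ^ 2 ^ n := by
    have h3 : 3 ≤ p := by
      have := hp.two_le
      rcases hodd with ⟨k, hk⟩
      omega
    calc 9 = 3 ^ 2 := by norm_num
      _ ≤ p ^ 2 := Nat.pow_le_pow_left h3 2
      _ ≤ p ^ 2 ^ n := Nat.pow_le_pow_right hp.pos (by
        calc 2 = 2 ^ 1 := by norm_num
          _ ≤ 2 ^ n := Nat.pow_le_pow_right (by norm_num) hn)
  have h2 : (2 : F) ≠ 0 := by
    apply Ring.two_ne_zero
    intro hc
    have hev := FiniteField.even_card_iff_char_two.1 hc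
    rw [hF] at hev
    have := hodd.pow (n := 2 ^ n)
    rw [Nat.odd_iff] at this
    omega
  have key : ∀ H : Subgroup (ProjectiveGL2 F), (Nonempty (H ≃* DihedralGroup (p ^ 2 ^ n - 1)) ∨
      Nonempty (H ≃* DihedralGroup (p ^ 2 ^ n + 1))) →
      ∃ m : ℕ, 0 < m ∧ Fintype.card F + 1 < 2 * m ∧ Nonempty (H ≃* DihedralGroup m) := by
    rintro H (h | h)
    · exact ⟨_, by omega, by omega, h⟩
    · exact ⟨_, by omega, by omega, h⟩
  obtain ⟨m, hm, hm2, ⟨e⟩⟩ := key H hH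
  obtain ⟨m', hm', hm2', ⟨e'⟩⟩ := key K hK
  have hexp : ∀ x : ↥(H ⊓ K), x ^ 2 = 1 := by
    rintro ⟨g, hgH, hgK⟩
    by_contra hcon
    have hg : g ^ 2 ≠ 1 := fun h => hcon (Subtype.ext h)
    obtain ⟨a1, a2, a3⟩ := dihedral_struct h2 m hm hm2 H e g hgH hg
    obtain ⟨b1, b2, b3⟩ := dihedral_struct h2 m' hm' hm2' K e' g hgK hg
    exact hne (le_antisymm (le_of_common g H K b1 b2 a3) (le_of_common g K H a1 a2 b3))
  have : NeZero m := ⟨hm.ne'⟩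
  have h4 : Nat.card ↥(H ⊓ K) ≤ 4 :=
    card_le_four m (e.toMonoidHom.comp (Subgroup.inclusion inf_le_left))
      (e.injective.comp (Subgroup.inclusion_injective _)) hexp
  have : Fact (Nat.Prime 2) := ⟨Nat.prime_two⟩
  have hpg : IsPGroup 2 ↥(H ⊓ K) := fun x => ⟨1, by simpa using hexp x⟩
  obtain ⟨k, hk⟩ := IsPGroup.iff_card.1 hpg
  have hk3 : k < 3 := by
    by_contra hcon
    have : 2 ^ 3 ≤ 2 ^ k := Nat.pow_le_pow_right (by norm_num) (not_lt.1 hcon)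
    omega
  interval_cases k
  · left
    exact Subgroup.card_eq_one.1 (by simpa using hk)
  · right; left
    exact ⟨isCyclic_of_prime_card (p := 2) (by simpa using hk), by simpa using hk⟩
  · right; right
    refine ⟨by simpa using hk, ?_⟩
    have hd : Monoid.exponent ↥(H ⊓ K) ∣ 2 := Monoid.exponent_dvd_of_forall_pow_eq_one hexp
    rcases (Nat.dvd_prime Nat.prime_two).1 hd with h1 | h1
    · rw [Monoid.exp_eq_one_iff] at h1
      have := Nat.card_of_subsingleton (1 : ↥(H ⊓ K))
      omega
    · exact h1
end
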